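/- arXiv:0706.4411 — 4 statements merged into one kernel-verified Lean document; each statement's English description precedes it below -/
import Mathlib

section
/- Let H be a complex separable Hilbert space, (e_j)_{j≥1} an orthonormal basis, (λ_j)_{j≥1} a nondecreasing sequence of positive reals, L(t) a family of symmetric operators from H¹(Γ) to H, ε > 0, and N > 0. Suppose φ : [a,b] → H is continuous, and for every t ∈ (a,b), φ(t) ∈ H²(Γ), φ has derivative i·L(t)φ(t) − ε·Γφ(t) at t, and ‖φ(t)‖₁² ≥ N‖φ(t)‖². Then ‖φ(b)‖² ≤ e^{−2εN(b−a)}‖φ(a)‖². -/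
open scoped InnerProductSpace ENNReal
open MeasureTheory

/-- The (squared) homogeneous `H¹(Γ)` norm: `‖ψ‖₁² = Σ_j λ_j |⟨e_j, ψ⟩|² ∈ [0,∞]`. -/
noncomputable def H1normSq {H : Type*} [NormedAddCommGroup H] [InnerProductSpace ℂ H]
    (e : ℕ → H) (lam : ℕ → ℝ) (ψ : H) : ℝ≥0∞ :=
  ∑' j, ENNReal.ofReal (lam j * ‖⟪e j, ψ⟫_ℂ‖ ^ 2)

/-- `ψ ∈ H¹(Γ)`. -/
def MemH1 {H : Type*} [NormedAddCommGroup H] [InnerProductSpace ℂ H]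
    (e : ℕ → H) (lam : ℕ → ℝ) (ψ : H) : Prop :=
  H1normSq e lam ψ ≠ ⊤

/-- `ψ ∈ H²(Γ)`, i.e. `Σ_j λ_j² |⟨e_j, ψ⟩|² < ∞`. -/
def MemH2 {H : Type*} [NormedAddCommGroup H] [InnerProductSpace ℂ H]
    (e : ℕ → H) (lam : ℕ → ℝ) (ψ : H) : Prop :=
  (∑' j, ENNReal.ofReal ((lam j) ^ 2 * ‖⟪e j, ψ⟫_ℂ‖ ^ 2)) ≠ ⊤

/-- `Γψ = Σ_j λ_j ⟨e_j, ψ⟩ e_j` (defined as a `tsum`; meaningful for `ψ ∈ H²(Γ)`). -/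
noncomputable def Gam {H : Type*} [NormedAddCommGroup H] [InnerProductSpace ℂ H]
    [CompleteSpace H] (e : ℕ → H) (lam : ℕ → ℝ) (ψ : H) : H :=
  ∑' j, ((lam j : ℂ) * ⟪e j, ψ⟫_ℂ) • e j

theorem aux_summable {f : ℕ → ℝ} (hf : ∀ j, 0 ≤ f j)
    (h : (∑' j, ENNReal.ofReal (f j)) ≠ ⊤) : Summable f := by
  have := ENNReal.summable_toReal h
  simpa [ENNReal.toReal_ofReal (hf _)] using this

theorem aux_H1_summable {H : Type*} [NormedAddCommGroup H] [InnerProductSpace ℂ H]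
    (e : ℕ → H) (lam : ℕ → ℝ) (hlam_pos : ∀ j, 0 < lam j) (hlam_mono : Monotone lam)
    (ψ : H) (h : MemH2 e lam ψ) : Summable (fun j => lam j * ‖⟪e j, ψ⟫_ℂ‖ ^ 2) := by
  have h2 := aux_summable (fun j => by positivity) h
  refine Summable.of_nonneg_of_le (fun j => by have := hlam_pos j; positivity) (fun j => ?_)
    (h2.mul_left (lam 0)⁻¹)
  have h0 := hlam_pos 0
  have hj := hlam_pos j
  have hm := hlam_mono (Nat.zero_le j)
  have : lam j ≤ (lam 0)⁻¹ * lam j ^ 2 := by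
    rw [inv_mul_eq_div, le_div_iff₀ h0]
    nlinarith
  rw [← mul_assoc]
  gcongr

theorem aux_H1 {H : Type*} [NormedAddCommGroup H] [InnerProductSpace ℂ H]
    (e : ℕ → H) (lam : ℕ → ℝ) (hlam_pos : ∀ j, 0 < lam j) (hlam_mono : Monotone lam)
    (ψ : H) (h : MemH2 e lam ψ) :
    H1normSq e lam ψ = ENNReal.ofReal (∑' j, lam j * ‖⟪e j, ψ⟫_ℂ‖ ^ 2) := by
  rw [ENNReal.ofReal_tsum_of_nonneg _ (aux_H1_summable e lam hlam_pos hlam_mono ψ h)]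
  · rfl
  · intro j
    have := hlam_pos j
    positivity

theorem aux_inner {H : Type*} [NormedAddCommGroup H] [InnerProductSpace ℂ H] [CompleteSpace H]
    (e : HilbertBasis ℕ ℂ H) (lam : ℕ → ℝ) (ψ : H) (h : MemH2 (⇑e) lam ψ) :
    ⟪ψ, Gam (⇑e) lam ψ⟫_ℂ = ((∑' j, lam j * ‖⟪e j, ψ⟫_ℂ‖ ^ 2 : ℝ) : ℂ) := by
  have h2 := aux_summable (fun j => by positivity) h
  have hmem : Memℓp (fun j => (lam j : ℂ) * ⟪e j, ψ⟫_ℂ) 2 := by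
    apply memℓp_gen
    simpa [mul_pow] using h2
  have hs : HasSum (fun j => ((lam j : ℂ) * ⟪e j, ψ⟫_ℂ) • e j) _ :=
    e.hasSum_repr_symm (⟨_, hmem⟩ : lp (fun _ : ℕ => ℂ) 2)
  have hs' := hs.summable.hasSum.mapL (innerSL ℂ ψ)
  change HasSum _ (⟪ψ, Gam (⇑e) lam ψ⟫_ℂ) at hs'
  rw [← hs'.tsum_eq, Complex.ofReal_tsum]
  refine tsum_congr fun j => ?_
  simp only [innerSL_apply_apply, inner_smul_right]
  rw [mul_assoc, ← inner_conj_symm ψ (e j), Complex.mul_conj, Complex.normSq_eq_norm_sq]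
  push_cast
  rfl

/-- Lemma `large`: if `‖φ(t)‖₁² ≥ N‖φ(t)‖²` on `(a,b)`, then
`‖φ(b)‖² ≤ e^{−2εN(b−a)} ‖φ(a)‖²`. -/
theorem statement1 {H : Type*} [NormedAddCommGroup H] [InnerProductSpace ℂ H]
    [CompleteSpace H] [TopologicalSpace.SeparableSpace H]
    (e : HilbertBasis ℕ ℂ H) (lam : ℕ → ℝ)
    (hlam_pos : ∀ j, 0 < lam j) (hlam_mono : Monotone lam)
    (L : ℝ → H →ₗ[ℂ] H)
    (hLsym : ∀ t : ℝ, ∀ x y : H, MemH1 (⇑e) lam x → MemH1 (⇑e) lam y →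
      ⟪L t x, y⟫_ℂ = ⟪x, L t y⟫_ℂ)
    (ε : ℝ) (hε : 0 < ε) (N : ℝ) (hN : 0 < N)
    (a b : ℝ) (hab : a ≤ b) (φ : ℝ → H)
    (hφcont : ContinuousOn φ (Set.Icc a b))
    (hφH2 : ∀ t ∈ Set.Ioo a b, MemH2 (⇑e) lam (φ t))
    (hφderiv : ∀ t ∈ Set.Ioo a b,
      HasDerivAt φ (Complex.I • L t (φ t) - ε • Gam (⇑e) lam (φ t)) t)
    (hφlarge : ∀ t ∈ Set.Ioo a b,
      ENNReal.ofReal (N * ‖φ t‖ ^ 2) ≤ H1normSq (⇑e) lam (φ t)) :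
    ‖φ b‖ ^ 2 ≤ Real.exp (-(2 * ε * N * (b - a))) * ‖φ a‖ ^ 2 := by
  have key : ∀ t ∈ Set.Ioo a b, ∃ d : ℝ, HasDerivAt (fun s => ‖φ s‖ ^ 2) d t ∧
      d ≤ -(2 * ε * N) * ‖φ t‖ ^ 2 := by
    intro t ht
    have hd := hφderiv t ht
    have h2 := hφH2 t ht
    have hH1 := aux_H1 (⇑e) lam hlam_pos hlam_mono (φ t) h2
    have hm : MemH1 (⇑e) lam (φ t) := by
      rw [MemH1, hH1]
      exact ENNReal.ofReal_ne_top
    have hlarge := hφlarge t ht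
    rw [hH1, ENNReal.ofReal_le_ofReal_iff
      (tsum_nonneg fun j => by have := hlam_pos j; positivity)] at hlarge
    have hi := aux_inner e lam (φ t) h2
    have hdd := hd.inner ℂ hd
    have hre := (Complex.reCLM.hasFDerivAt.comp_hasDerivAt t hdd)
    have hfun : (Complex.reCLM ∘ fun s => ⟪φ s, φ s⟫_ℂ) = fun s => ‖φ s‖ ^ 2 := by
      funext s
      simp only [Function.comp, Complex.reCLM_apply]
      exact inner_self_eq_norm_sq (𝕜 := ℂ) (φ s)
    rw [hfun] at hre
    refine ⟨_, hre, ?_⟩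
    have hs := hLsym t (φ t) (φ t) hm hm
    have him : (⟪φ t, L t (φ t)⟫_ℂ).im = 0 := by
      have h1 := congrArg Complex.im hs
      rw [← inner_conj_symm, Complex.conj_im] at h1
      linarith
    have hv : (⟪φ t, Complex.I • L t (φ t) - ε • Gam (⇑e) lam (φ t)⟫_ℂ).re
        = - (ε * ∑' j, lam j * ‖⟪e j, φ t⟫_ℂ‖ ^ 2) := by
      rw [inner_sub_right, inner_smul_right, ← Complex.coe_smul, inner_smul_right, hi,
        ← Complex.ofReal_mul, Complex.sub_re, Complex.ofReal_re, Complex.I_mul_re, him]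
      ring
    have hv' : (⟪Complex.I • L t (φ t) - ε • Gam (⇑e) lam (φ t), φ t⟫_ℂ).re
        = - (ε * ∑' j, lam j * ‖⟪e j, φ t⟫_ℂ‖ ^ 2) := by
      rw [← inner_conj_symm, Complex.conj_re, hv]
    rw [Complex.reCLM_apply, Complex.add_re, hv, hv']
    have := mul_le_mul_of_nonneg_left hlarge hε.le
    linarith
  have hanti : AntitoneOn (fun t => Real.exp (2 * ε * N * (t - a)) * ‖φ t‖ ^ 2)
      (Set.Icc a b) := by
    have hD : ∀ t ∈ Set.Ioo a b, ∃ d : ℝ,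
        HasDerivAt (fun t => Real.exp (2 * ε * N * (t - a)) * ‖φ t‖ ^ 2) d t ∧ d ≤ 0 := by
      intro t ht
      obtain ⟨d, hd, hle⟩ := key t ht
      have he := ((((hasDerivAt_id t).sub_const a).const_mul (2 * ε * N)).exp).mul hd
      refine ⟨_, he, ?_⟩
      have hp := Real.exp_pos (2 * ε * N * (t - a))
      have := mul_le_mul_of_nonneg_left hle hp.le
      simp only [id]
      linarith
    apply antitoneOn_of_deriv_nonpos (convex_Icc a b)
    · exact ContinuousOn.mul (by fun_prop) (hφcont.norm.pow 2)
    · rw [interior_Icc]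
      intro t ht
      obtain ⟨d, hd, -⟩ := hD t ht
      exact hd.differentiableAt.differentiableWithinAt
    · rw [interior_Icc]
      intro t ht
      obtain ⟨d, hd, hle⟩ := hD t ht
      rw [hd.deriv]
      exact hle
  have h := hanti (Set.left_mem_Icc.2 hab) (Set.right_mem_Icc.2 hab) hab
  simp only [sub_self, mul_zero, Real.exp_zero, one_mul] at h
  rw [Real.exp_neg, inv_mul_eq_div, le_div_iff₀ (Real.exp_pos _)]
  linarith
end

section
/- Let H be a complex separable Hilbert space, (e_j)_{j≥1} an orthonormal basis, (λ_j)_{j≥1} a nondecreasing sequence of positive reals, L(t) a family of symmetric operators from H¹(Γ) to H, and ε > 0. Suppose φ : [0,∞) → H is continuous and for every t > 0, φ(t) ∈ H²(Γ) and φ has derivative i·L(t)φ(t) − ε·Γφ(t) at t. Then for every T > 0, 2ε ∫₀^T ‖φ(t)‖₁² dt ≤ ‖φ(0)‖². -/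
open scoped InnerProductSpace ENNReal
open MeasureTheory

lemma gam_inner {H : Type*} [NormedAddCommGroup H] [InnerProductSpace ℂ H]
    [CompleteSpace H] (e : HilbertBasis ℕ ℂ H) (lam : ℕ → ℝ) (ψ : H)
    (h : MemH2 (⇑e) lam ψ) :
    HasSum (fun j => lam j * ‖⟪e j, ψ⟫_ℂ‖ ^ 2) (⟪ψ, Gam (⇑e) lam ψ⟫_ℂ).re := by
  have hs : Summable (fun j => (lam j) ^ 2 * ‖⟪e j, ψ⟫_ℂ‖ ^ 2) := by
    have := ENNReal.summable_toReal h
    refine this.congr fun j => ?_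
    rw [ENNReal.toReal_ofReal (by positivity)]
  have hm : Memℓp (fun j => (lam j : ℂ) * ⟪e j, ψ⟫_ℂ) 2 := by
    rw [memℓp_gen_iff (by norm_num)]
    refine hs.congr fun j => ?_
    simp [mul_pow]
  have h1 := e.hasSum_repr_symm ⟨_, hm⟩
  have h2 : HasSum (fun j => ((lam j : ℂ) * ⟪e j, ψ⟫_ℂ) • e j) (Gam (⇑e) lam ψ) :=
    h1.summable.hasSum
  have h3 := (Complex.hasSum_re ((innerSL ℂ ψ).hasSum h2))
  simp only [innerSL_apply_apply] at h3
  convert h3 using 1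
  funext j
  simp only [inner_smul_right]
  rw [mul_assoc, ← inner_conj_symm ψ (e j), Complex.mul_conj, Complex.normSq_eq_norm_sq,
    ← Complex.ofReal_mul, Complex.ofReal_re]

lemma memH1_of_memH2 {H : Type*} [NormedAddCommGroup H] [InnerProductSpace ℂ H]
    [CompleteSpace H] (e : HilbertBasis ℕ ℂ H) (lam : ℕ → ℝ) (ψ : H)
    (h : MemH2 (⇑e) lam ψ) : MemH1 (⇑e) lam ψ := by
  have h1 := (gam_inner e lam ψ h).summable
  unfold MemH1 H1normSq
  exact h1.tsum_ofReal_ne_top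

/-- the energy inequality `2ε ∫₀^T ‖φ(t)‖₁² dt ≤ ‖φ(0)‖²`
(stated with the lower Lebesgue integral of the extended-real valued `‖φ(t)‖₁²`). -/
theorem statement2 {H : Type*} [NormedAddCommGroup H] [InnerProductSpace ℂ H]
    [CompleteSpace H] [TopologicalSpace.SeparableSpace H]
    (e : HilbertBasis ℕ ℂ H) (lam : ℕ → ℝ)
    (hlam_pos : ∀ j, 0 < lam j) (hlam_mono : Monotone lam)
    (L : ℝ → H →ₗ[ℂ] H)
    (hLsym : ∀ t : ℝ, ∀ x y : H, MemH1 (⇑e) lam x → MemH1 (⇑e) lam y →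
      ⟪L t x, y⟫_ℂ = ⟪x, L t y⟫_ℂ)
    (ε : ℝ) (hε : 0 < ε) (φ : ℝ → H)
    (hφcont : ContinuousOn φ (Set.Ici (0 : ℝ)))
    (hφH2 : ∀ t : ℝ, 0 < t → MemH2 (⇑e) lam (φ t))
    (hφderiv : ∀ t : ℝ, 0 < t →
      HasDerivAt φ (Complex.I • L t (φ t) - ε • Gam (⇑e) lam (φ t)) t) :
    ∀ T : ℝ, 0 < T →
      2 * ENNReal.ofReal ε * ∫⁻ t in Set.Ioc (0 : ℝ) T, H1normSq (⇑e) lam (φ t) ≤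
        ENNReal.ofReal (‖φ 0‖ ^ 2) := by
  intro T hT
  have hcont : ContinuousOn φ (Set.Icc 0 T) := hφcont.mono Set.Icc_subset_Ici_self
  have hcj : ∀ j, ContinuousOn (fun t => lam j * ‖⟪e j, φ t⟫_ℂ‖ ^ 2) (Set.Icc 0 T) := fun j =>
    continuousOn_const.mul ((ContinuousOn.inner (𝕜 := ℂ) continuousOn_const hcont).norm.pow 2)
  -- derivative of the energy
  have hder : ∀ t, 0 < t → HasDerivAt (fun t => -‖φ t‖ ^ 2)
      (2 * ε * (⟪φ t, Gam (⇑e) lam (φ t)⟫_ℂ).re) t := by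
    intro t ht
    have hm := memH1_of_memH2 e lam _ (hφH2 t ht)
    have hsym := hLsym t _ _ hm hm
    have hreal : (⟪φ t, L t (φ t)⟫_ℂ).im = 0 := by
      rw [← inner_conj_symm] at hsym
      exact Complex.conj_eq_iff_im.mp hsym
    have hd := hφderiv t ht
    have h1 := (hd.inner ℂ hd)
    have h2 := (Complex.reCLM.hasFDerivAt.comp_hasDerivAt t h1).neg
    have hfun : (fun t => -‖φ t‖ ^ 2) = -(⇑Complex.reCLM ∘ fun t => ⟪φ t, φ t⟫_ℂ) := by
      funext s
      simp only [Pi.neg_apply, Function.comp, Complex.reCLM_apply]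
      rw [inner_self_eq_norm_sq_to_K]
      norm_cast
    rw [hfun]
    refine h2.congr_deriv ?_
    rw [← inner_conj_symm (Complex.I • L t (φ t) - ε • Gam (⇑e) lam (φ t)) (φ t)]
    have hε' : ε • Gam (⇑e) lam (φ t) = (ε : ℂ) • Gam (⇑e) lam (φ t) := rfl
    rw [hε']
    simp only [inner_sub_right, inner_smul_right, Complex.reCLM_apply, Complex.add_re,
      Complex.conj_re, Complex.sub_re, Complex.mul_re, Complex.I_re, Complex.I_im, hreal,
      Complex.ofReal_re, Complex.ofReal_im]
    ring
  have key : ∀ s : Finset ℕ, ∫ t in (0 : ℝ)..T, 2 * ε * ∑ j ∈ s, lam j * ‖⟪e j, φ t⟫_ℂ‖ ^ 2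
      ≤ ‖φ 0‖ ^ 2 := by
    intro s
    have hc : ContinuousOn (fun t => 2 * ε * ∑ j ∈ s, lam j * ‖⟪e j, φ t⟫_ℂ‖ ^ 2)
        (Set.Icc 0 T) := continuousOn_const.mul (continuousOn_finsetSum _ fun j _ => hcj j)
    have := intervalIntegral.integral_le_sub_of_hasDeriv_right_of_le hT.le
      (g := fun t => -‖φ t‖ ^ 2) (hcont.norm.pow 2).neg
      (fun t ht => (hder t ht.1).hasDerivWithinAt)
      (hc.integrableOn_Icc) (fun t ht => by
        have h := gam_inner e lam _ (hφH2 t ht.1)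
        have := sum_le_hasSum s (fun j _ => mul_nonneg (hlam_pos j).le (sq_nonneg _)) h
        gcongr)
    nlinarith [sq_nonneg ‖φ T‖]
  have hmeas : ∀ j, AEMeasurable (fun t => ENNReal.ofReal (lam j * ‖⟪e j, φ t⟫_ℂ‖ ^ 2))
      (volume.restrict (Set.Ioc 0 T)) := fun j =>
    (((hcj j).mono Set.Ioc_subset_Icc_self).aemeasurable measurableSet_Ioc).ennreal_ofReal
  unfold H1normSq
  rw [lintegral_tsum hmeas, ← ENNReal.tsum_mul_left, ENNReal.tsum_eq_iSup_sum]
  refine iSup_le fun s => ?_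
  rw [← Finset.mul_sum, ← lintegral_finsetSum' _ (fun j _ => hmeas j)]
  have h2 : (2 : ℝ≥0∞) * ENNReal.ofReal ε = ENNReal.ofReal (2 * ε) := by
    rw [ENNReal.ofReal_mul (by norm_num)]; simp
  rw [h2, ← lintegral_const_mul' _ _ ENNReal.ofReal_ne_top]
  have hnn : ∀ t, 0 ≤ 2 * ε * ∑ j ∈ s, lam j * ‖⟪e j, φ t⟫_ℂ‖ ^ 2 := fun t =>
    mul_nonneg (by positivity)
      (Finset.sum_nonneg fun j _ => mul_nonneg (hlam_pos j).le (sq_nonneg _))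
  have hc : ContinuousOn (fun t => 2 * ε * ∑ j ∈ s, lam j * ‖⟪e j, φ t⟫_ℂ‖ ^ 2)
      (Set.Icc 0 T) := continuousOn_const.mul (continuousOn_finsetSum _ fun j _ => hcj j)
  have h3 := ofReal_integral_eq_lintegral_ofReal
    (hc.integrableOn_Icc.mono_set Set.Ioc_subset_Icc_self : IntegrableOn _ (Set.Ioc 0 T) volume)
    (Filter.Eventually.of_forall hnn)
  have h4 := key s
  rw [intervalIntegral.integral_of_le hT.le] at h4
  calc _ = ∫⁻ t in Set.Ioc 0 T,
        ENNReal.ofReal (2 * ε * ∑ j ∈ s, lam j * ‖⟪e j, φ t⟫_ℂ‖ ^ 2) := by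
        refine lintegral_congr fun t => ?_
        rw [ENNReal.ofReal_mul (p := 2 * ε) (by positivity),
          ENNReal.ofReal_sum_of_nonneg fun j _ => mul_nonneg (hlam_pos j).le (sq_nonneg _)]
    _ ≤ _ := by
        rw [← h3]
        exact ENNReal.ofReal_le_ofReal h4
end

section
/- Let H be a complex separable Hilbert space, (e_j)_{j≥1} an orthonormal basis, (λ_j)_{j≥1} a nondecreasing sequence of positive reals, L(t) a family of symmetric operators from H¹(Γ) to H, and ε ≥ 0. Suppose φ, ψ : [0,T] → H are continuous, φ(0) = ψ(0), and for every t ∈ (0,T), φ(t), ψ(t) ∈ H²(Γ), φ has derivative i·L(t)φ(t) − ε·Γφ(t) at t, and ψ has derivative i·L(t)ψ(t) − ε·Γψ(t) at t. Then φ(t) = ψ(t) for all t ∈ [0,T]. -/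
open scoped InnerProductSpace ENNReal
open MeasureTheory

section Helpers

variable {H : Type*} [NormedAddCommGroup H] [InnerProductSpace ℂ H] [CompleteSpace H]

lemma MemH2.summable {e : ℕ → H} {lam : ℕ → ℝ} {x : H} (h : MemH2 e lam x) :
    Summable (fun j => (lam j) ^ 2 * ‖⟪e j, x⟫_ℂ‖ ^ 2) := by
  have := ENNReal.summable_toReal h
  refine this.congr (fun j => ?_)
  rw [ENNReal.toReal_ofReal (by positivity)]

lemma MemH2.memH1 {e : ℕ → H} {lam : ℕ → ℝ} (hpos : ∀ j, 0 < lam j) (hmono : Monotone lam)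
    {x : H} (h : MemH2 e lam x) : MemH1 e lam x := by
  have hs : Summable (fun j => lam j * ‖⟪e j, x⟫_ℂ‖ ^ 2) := by
    refine Summable.of_nonneg_of_le (fun j => ?_) (fun j => ?_) (h.summable.mul_left (lam 0)⁻¹)
    · have := hpos j
      positivity
    · have h1 := hmono (Nat.zero_le j)
      have h2 := hpos j
      have h3 := hpos 0
      rw [← mul_assoc]
      gcongr
      rw [inv_mul_eq_div, le_div_iff₀ h3, sq]
      gcongr
  exact hs.tsum_ofReal_ne_top

lemma MemH2.hasSum {e : HilbertBasis ℕ ℂ H} {lam : ℕ → ℝ} {x : H} (h : MemH2 (⇑e) lam x) :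
    HasSum (fun j => ((lam j : ℂ) * ⟪e j, x⟫_ℂ) • e j) (Gam (⇑e) lam x) := by
  have hm : Memℓp (fun j => (lam j : ℂ) * ⟪e j, x⟫_ℂ) 2 := by
    rw [memℓp_gen_iff (by norm_num)]
    refine h.summable.congr (fun j => ?_)
    simp [mul_pow]
  have := e.hasSum_repr_symm ⟨_, hm⟩
  exact this.summable.hasSum

lemma MemH2.gam_re_nonneg {e : HilbertBasis ℕ ℂ H} {lam : ℕ → ℝ} (hpos : ∀ j, 0 < lam j) {x y : H}
    (hx : MemH2 (⇑e) lam x) (hy : MemH2 (⇑e) lam y) :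
    0 ≤ (⟪x - y, Gam (⇑e) lam x - Gam (⇑e) lam y⟫_ℂ).re := by
  have h1 := (hx.hasSum.sub hy.hasSum).mapL (innerSL ℂ (x - y))
  have h2 := h1.mapL Complex.reCLM
  refine h2.nonneg (fun j => ?_)
  have : ((lam j : ℂ) * ⟪e j, x⟫_ℂ) • e j - ((lam j : ℂ) * ⟪e j, y⟫_ℂ) • e j
      = ((lam j : ℂ) * ⟪e j, x - y⟫_ℂ) • e j := by
    rw [← sub_smul, ← mul_sub, inner_sub_right]
  simp only [this, innerSL_apply_apply, inner_smul_right, Complex.reCLM_apply]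
  rw [mul_assoc, Complex.re_ofReal_mul]
  refine mul_nonneg (hpos j).le ?_
  rw [← inner_conj_symm (x - y) (e j), Complex.mul_conj, Complex.ofReal_re]
  exact Complex.normSq_nonneg _

end Helpers

/-- uniqueness of solutions of `φ' = iL(t)φ − εΓφ`. -/
theorem statement3 {H : Type*} [NormedAddCommGroup H] [InnerProductSpace ℂ H]
    [CompleteSpace H] [TopologicalSpace.SeparableSpace H]
    (e : HilbertBasis ℕ ℂ H) (lam : ℕ → ℝ)
    (hlam_pos : ∀ j, 0 < lam j) (hlam_mono : Monotone lam)
    (L : ℝ → H →ₗ[ℂ] H)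
    (hLsym : ∀ t : ℝ, ∀ x y : H, MemH1 (⇑e) lam x → MemH1 (⇑e) lam y →
      ⟪L t x, y⟫_ℂ = ⟪x, L t y⟫_ℂ)
    (ε : ℝ) (hε : 0 ≤ ε) (T : ℝ) (φ ψ : ℝ → H)
    (hφcont : ContinuousOn φ (Set.Icc 0 T)) (hψcont : ContinuousOn ψ (Set.Icc 0 T))
    (h0 : φ 0 = ψ 0)
    (hφH2 : ∀ t ∈ Set.Ioo (0 : ℝ) T, MemH2 (⇑e) lam (φ t))
    (hψH2 : ∀ t ∈ Set.Ioo (0 : ℝ) T, MemH2 (⇑e) lam (ψ t))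
    (hφderiv : ∀ t ∈ Set.Ioo (0 : ℝ) T,
      HasDerivAt φ (Complex.I • L t (φ t) - ε • Gam (⇑e) lam (φ t)) t)
    (hψderiv : ∀ t ∈ Set.Ioo (0 : ℝ) T,
      HasDerivAt ψ (Complex.I • L t (ψ t) - ε • Gam (⇑e) lam (ψ t)) t) :
    ∀ t ∈ Set.Icc (0 : ℝ) T, φ t = ψ t := by
  set d : ℝ → H := fun t => φ t - ψ t with hd
  have hdc : ContinuousOn d (Set.Icc 0 T) := hφcont.sub hψcont
  have key : ∀ t ∈ Set.Ioo (0 : ℝ) T, ∃ c : ℝ, c ≤ 0 ∧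
      HasDerivAt (fun s => (⟪d s, d s⟫_ℂ).re) c t := by
    intro t ht
    have hx := hφH2 t ht
    have hy := hψH2 t ht
    have hD := (hφderiv t ht).sub (hψderiv t ht)
    have hI := Complex.reCLM.hasFDerivAt.comp_hasDerivAt t (hD.inner ℂ hD)
    refine ⟨_, ?_, hI⟩
    have hG := hx.gam_re_nonneg hlam_pos hy
    have h1 := hx.memH1 hlam_pos hlam_mono
    have h2 := hy.memH1 hlam_pos hlam_mono
    have hS : ⟪L t (φ t - ψ t), φ t - ψ t⟫_ℂ = ⟪φ t - ψ t, L t (φ t - ψ t)⟫_ℂ := by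
      simp only [map_sub, inner_sub_left, inner_sub_right, hLsym t _ _ h1 h1, hLsym t _ _ h1 h2,
        hLsym t _ _ h2 h1, hLsym t _ _ h2 h2]
    have e1 : Complex.I • L t (φ t) - ε • Gam (⇑e) lam (φ t)
        - (Complex.I • L t (ψ t) - ε • Gam (⇑e) lam (ψ t))
        = Complex.I • L t (φ t - ψ t)
          - (ε : ℂ) • (Gam (⇑e) lam (φ t) - Gam (⇑e) lam (ψ t)) := by
      rw [map_sub, smul_sub, smul_sub, Complex.coe_smul, Complex.coe_smul]
      abel
    rw [e1]
    simp only [Pi.sub_apply, Complex.reCLM_apply, Complex.add_re]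
    set v := Gam (⇑e) lam (φ t) - Gam (⇑e) lam (ψ t)
    set u := φ t - ψ t
    have hG' : (⟪v, u⟫_ℂ).re = (⟪u, v⟫_ℂ).re := by
      rw [← inner_conj_symm, Complex.conj_re]
    simp only [inner_sub_left, inner_sub_right, inner_smul_left, inner_smul_right, hS,
      Complex.conj_I, Complex.conj_ofReal, Complex.sub_re, Complex.re_ofReal_mul, hG']
    have := mul_nonneg hε hG
    simp only [Complex.mul_re, Complex.neg_re, Complex.neg_im, Complex.I_re, Complex.I_im]
    linarith
  have hanti : AntitoneOn (fun s => (⟪d s, d s⟫_ℂ).re) (Set.Icc 0 T) := by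
    refine antitoneOn_of_deriv_nonpos (convex_Icc 0 T) ?_ ?_ ?_
    · exact Complex.continuous_re.comp_continuousOn (hdc.inner hdc)
    · rw [interior_Icc]
      intro t ht
      obtain ⟨c, -, hc⟩ := key t ht
      exact hc.differentiableAt.differentiableWithinAt
    · rw [interior_Icc]
      intro t ht
      obtain ⟨c, hc0, hc⟩ := key t ht
      rw [hc.deriv]
      exact hc0
  intro t ht
  have h := hanti (Set.left_mem_Icc.2 (ht.1.trans ht.2)) ht ht.1
  have hz : d 0 = 0 := sub_eq_zero.2 h0
  simp only [hz, inner_zero_left, Complex.zero_re] at h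
  have h5 : (⟪d t, d t⟫_ℂ).re = ‖d t‖ ^ 2 := by
    rw [inner_self_eq_norm_sq_to_K]
    norm_cast
  rw [h5] at h
  have h6 : ‖d t‖ = 0 := by
    have := norm_nonneg (d t)
    nlinarith
  exact sub_eq_zero.1 (norm_eq_zero.1 h6)
end

section
/- Let H be a complex separable Hilbert space, (e_j)_{j≥1} an orthonormal basis, (λ_j)_{j≥1} a nondecreasing sequence of positive reals with λ_j → ∞, and L(t) a 1-periodic family of symmetric operators from H¹(Γ) to H satisfying ‖L(t)ψ‖ ≤ C₀‖ψ‖₁ for all t and all ψ ∈ H¹(Γ) (Condition 1). Let U : ℝ → B(H) be a strongly continuous family of unitary operators with U(0) = I such that for every ψ ∈ H¹(Γ), t ↦ U(t)ψ has derivative i·L(t)U(t)ψ at each t, and assume there is a locally bounded B : ℝ → [0,∞) with ‖U(t)U(s)*ψ‖₁ ≤ B(t−s)‖ψ‖₁ for all s,t and all ψ ∈ H¹(Γ) (Condition 2). Assume the period operator V = U(1) has no eigenvector in H¹(Γ). Then for every τ > 0 and δ > 0 there exists ε₀ > 0 such that for every ε ∈ (0,ε₀), every φ₀ ∈ H with ‖φ₀‖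 = 1, and every continuous φ^ε : [0,τ/ε] → H with φ^ε(0) = φ₀ such that for each t ∈ (0,τ/ε), φ^ε(t) ∈ H²(Γ) and φ^ε has derivative i·L(t)φ^ε(t) − ε·Γφ^ε(t) at t, one has ‖φ^ε(τ/ε)‖ < δ. -/
open scoped InnerProductSpace ENNReal
open MeasureTheory

namespace Relax

set_option linter.unusedSectionVars false

section Basic
variable {H : Type*} [NormedAddCommGroup H] [InnerProductSpace ℂ H]

/-- real-valued squared `H¹` norm -/
noncomputable def h1 (e : ℕ → H) (lam : ℕ → ℝ) (x : H) : ℝ :=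
  ∑' j, lam j * ‖⟪e j, x⟫_ℂ‖ ^ 2

lemma summable_iff_ofReal {f : ℕ → ℝ} (hf : ∀ j, 0 ≤ f j) :
    (∑' j, ENNReal.ofReal (f j)) ≠ ⊤ ↔ Summable f := by
  constructor
  · intro h
    have := ENNReal.summable_toReal h
    refine this.congr fun j => ?_
    rw [ENNReal.toReal_ofReal (hf j)]
  · intro h
    rw [← ENNReal.ofReal_tsum_of_nonneg hf h]
    exact ENNReal.ofReal_ne_top

lemma memH1_iff {e : ℕ → H} {lam : ℕ → ℝ} (hl : ∀ j, 0 < lam j) {x : H} :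
    MemH1 e lam x ↔ Summable fun j => lam j * ‖⟪e j, x⟫_ℂ‖ ^ 2 :=
  summable_iff_ofReal fun j => mul_nonneg (hl j).le (sq_nonneg _)

lemma h1_nonneg {e : ℕ → H} {lam : ℕ → ℝ} (hl : ∀ j, 0 < lam j) (x : H) :
    0 ≤ h1 e lam x := tsum_nonneg fun j => mul_nonneg (hl j).le (sq_nonneg _)

lemma H1normSq_eq {e : ℕ → H} {lam : ℕ → ℝ} (hl : ∀ j, 0 < lam j) {x : H}
    (hx : MemH1 e lam x) : H1normSq e lam x = ENNReal.ofReal (h1 e lam x) := by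
  rw [h1, ENNReal.ofReal_tsum_of_nonneg (fun j => mul_nonneg (hl j).le (sq_nonneg _))
    ((memH1_iff hl).1 hx)]
  rfl

/-- transfer of an `H¹` bound to real numbers -/
lemma transfer {e : ℕ → H} {lam : ℕ → ℝ} (hl : ∀ j, 0 < lam j) {x y : H} {b : ℝ}
    (hx : MemH1 e lam x) (h : H1normSq e lam y ≤ ENNReal.ofReal (b ^ 2) * H1normSq e lam x) :
    MemH1 e lam y ∧ h1 e lam y ≤ b ^ 2 * h1 e lam x := by
  have hy : MemH1 e lam y := by
    unfold MemH1 at *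
    exact ne_top_of_le_ne_top (ENNReal.mul_ne_top ENNReal.ofReal_ne_top hx) h
  refine ⟨hy, ?_⟩
  rw [H1normSq_eq hl hx, H1normSq_eq hl hy, ← ENNReal.ofReal_mul (sq_nonneg b)] at h
  exact (ENNReal.ofReal_le_ofReal_iff (mul_nonneg (sq_nonneg b) (h1_nonneg hl x))).1 h

lemma memH1_sub {e : ℕ → H} {lam : ℕ → ℝ} (hl : ∀ j, 0 < lam j) {x y : H}
    (hx : MemH1 e lam x) (hy : MemH1 e lam y) : MemH1 e lam (x - y) := by
  rw [memH1_iff hl] at *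
  refine Summable.of_nonneg_of_le (fun j => mul_nonneg (hl j).le (sq_nonneg _)) (fun j => ?_)
    ((hx.add hy).mul_left 2)
  rw [inner_sub_right]
  have h1 := norm_sub_le ⟪e j, x⟫_ℂ ⟪e j, y⟫_ℂ
  have h2 : ‖⟪e j, x⟫_ℂ - ⟪e j, y⟫_ℂ‖ ^ 2 ≤ 2 * (‖⟪e j, x⟫_ℂ‖ ^ 2 + ‖⟪e j, y⟫_ℂ‖ ^ 2) := by
    nlinarith [norm_nonneg (⟪e j, x⟫_ℂ - ⟪e j, y⟫_ℂ), sq_nonneg (‖⟪e j, x⟫_ℂ‖ - ‖⟪e j, y⟫_ℂ‖),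
      norm_nonneg ⟪e j, x⟫_ℂ, norm_nonneg ⟪e j, y⟫_ℂ]
  nlinarith [hl j]

variable [CompleteSpace H]

lemma hasSum_sq (e : HilbertBasis ℕ ℂ H) (x : H) :
    HasSum (fun j => ‖⟪e j, x⟫_ℂ‖ ^ 2) (‖x‖ ^ 2) := by
  have h := e.hasSum_inner_mul_inner x x
  have h2 := Complex.hasSum_re h
  have e1 : (fun j => (⟪x, e j⟫_ℂ * ⟪e j, x⟫_ℂ).re) = fun j => ‖⟪e j, x⟫_ℂ‖ ^ 2 := by
    funext j
    rw [← inner_conj_symm x (e j), ← Complex.normSq_eq_conj_mul_self, Complex.ofReal_re,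
      Complex.normSq_eq_norm_sq]
  rw [e1, inner_self_eq_norm_sq_to_K] at h2
  convert! h2 using 1
  norm_cast

lemma memH2_memH1 (e : HilbertBasis ℕ ℂ H) {lam : ℕ → ℝ} (hl : ∀ j, 0 < lam j) {x : H}
    (hx : MemH2 e lam x) : MemH1 e lam x := by
  rw [memH1_iff hl]
  have h2 : Summable fun j => lam j ^ 2 * ‖⟪e j, x⟫_ℂ‖ ^ 2 :=
    (summable_iff_ofReal fun j => by positivity).1 hx
  refine Summable.of_nonneg_of_le (fun j => mul_nonneg (hl j).le (sq_nonneg _)) (fun j => ?_)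
    (h2.add (hasSum_sq e x).summable)
  nlinarith [sq_nonneg (‖⟪e j, x⟫_ℂ‖), sq_nonneg (lam j - 1),
    mul_nonneg (sq_nonneg (lam j - 1)) (sq_nonneg (‖⟪e j, x⟫_ℂ‖)), hl j,
    mul_nonneg (hl j).le (sq_nonneg (‖⟪e j, x⟫_ℂ‖))]

lemma memH1_basis (e : HilbertBasis ℕ ℂ H) {lam : ℕ → ℝ} (hl : ∀ j, 0 < lam j) (i : ℕ) :
    MemH1 e lam (e i) := by
  rw [memH1_iff hl]
  refine summable_of_ne_finset_zero (s := {i}) fun j hj => ?_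
  have : ⟪e j, e i⟫_ℂ = 0 := e.orthonormal.2 (by simpa using hj)
  simp [this]

lemma gam_inner (e : HilbertBasis ℕ ℂ H) {lam : ℕ → ℝ} {x : H}
    (hx : MemH2 e lam x) (y : H) :
    HasSum (fun j => (lam j : ℂ) * (⟪y, e j⟫_ℂ * ⟪e j, x⟫_ℂ)) ⟪y, Gam e lam x⟫_ℂ := by
  have h2 : Summable fun j => lam j ^ 2 * ‖⟪e j, x⟫_ℂ‖ ^ 2 :=
    (summable_iff_ofReal fun j => by positivity).1 hx
  have hm : Memℓp (fun j => (lam j : ℂ) * ⟪e j, x⟫_ℂ) 2 := by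
    apply memℓp_gen
    refine h2.congr fun j => ?_
    simp [mul_pow]
  have hs := e.hasSum_repr_symm ⟨_, hm⟩
  have hs' : HasSum (fun j => ((lam j : ℂ) * ⟪e j, x⟫_ℂ) • e j) (Gam e lam x) := by
    unfold Gam
    exact hs.summable.hasSum
  have := hs'.mapL (innerSL ℂ y)
  convert! this using 1
  funext j
  rw [innerSL_apply_apply, inner_smul_right]
  ring

lemma gam_self (e : HilbertBasis ℕ ℂ H) {lam : ℕ → ℝ} {x : H}
    (hx : MemH2 e lam x) : (⟪x, Gam e lam x⟫_ℂ).re = h1 e lam x := by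
  have h := Complex.hasSum_re (gam_inner e hx x)
  rw [h1, ← h.tsum_eq]
  congr 1
  funext j
  rw [← inner_conj_symm x (e j), ← Complex.normSq_eq_conj_mul_self, ← Complex.ofReal_mul,
    Complex.ofReal_re, Complex.normSq_eq_norm_sq]

lemma gam_sub (e : HilbertBasis ℕ ℂ H) {lam : ℕ → ℝ} (hl : ∀ j, 0 < lam j) {x y : H}
    (hx : MemH2 e lam x) (hy : MemH1 e lam y) :
    - (1 / 4) * h1 e lam y ≤ (⟪x - y, Gam e lam x⟫_ℂ).re := by
  have h := Complex.hasSum_re (gam_inner e hx (x - y))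
  have h' : HasSum (fun j => - (1 / 4) * (lam j * ‖⟪e j, y⟫_ℂ‖ ^ 2)) (- (1 / 4) * h1 e lam y) :=
    ((memH1_iff hl).1 hy).hasSum.mul_left _
  refine hasSum_le (fun j => ?_) h' h
  rw [Complex.re_ofReal_mul, inner_sub_left, sub_mul, Complex.sub_re]
  rw [← inner_conj_symm x (e j), ← Complex.normSq_eq_conj_mul_self, Complex.ofReal_re,
    Complex.normSq_eq_norm_sq]
  have h3 : (⟪y, e j⟫_ℂ * ⟪e j, x⟫_ℂ).re ≤ ‖⟪e j, y⟫_ℂ‖ * ‖⟪e j, x⟫_ℂ‖ := by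
    refine (Complex.re_le_norm _).trans ?_
    rw [norm_mul, norm_inner_symm]
  have h4 : - (1 / 4) * ‖⟪e j, y⟫_ℂ‖ ^ 2 ≤
      ‖⟪e j, x⟫_ℂ‖ ^ 2 - (⟪y, e j⟫_ℂ * ⟪e j, x⟫_ℂ).re := by
    nlinarith [sq_nonneg (‖⟪e j, x⟫_ℂ‖ - ‖⟪e j, y⟫_ℂ‖ / 2)]
  nlinarith [mul_le_mul_of_nonneg_left h4 (hl j).le]

lemma tail_bound (e : HilbertBasis ℕ ℂ H) {lam : ℕ → ℝ} (hl : ∀ j, 0 < lam j)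
    (hmono : Monotone lam) {x : H} (hx : MemH1 e lam x) (J : ℕ) :
    lam J * ‖x‖ ^ 2 ≤ h1 e lam x + lam J * ∑ j ∈ Finset.range J, ‖⟪e j, x⟫_ℂ‖ ^ 2 := by
  have h1' : HasSum (fun j => lam j * ‖⟪e j, x⟫_ℂ‖ ^ 2) (h1 e lam x) :=
    ((memH1_iff hl).1 hx).hasSum
  have h2 := (hasSum_sq e x).mul_left (lam J)
  have h3 : HasSum (fun j => if j ∈ Finset.range J then lam J * ‖⟪e j, x⟫_ℂ‖ ^ 2 else 0)
      (∑ j ∈ Finset.range J, lam J * ‖⟪e j, x⟫_ℂ‖ ^ 2) := by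
    have := hasSum_sum_of_ne_finset_zero (L := SummationFilter.unconditional ℕ) (s := Finset.range J)
      (f := fun j => if j ∈ Finset.range J then lam J * ‖⟪e j, x⟫_ℂ‖ ^ 2 else 0)
      (fun b hb => if_neg hb)
    convert! this using 1
    exact Finset.sum_congr rfl fun j hj => (if_pos hj).symm
  rw [Finset.mul_sum]
  refine hasSum_le (fun j => ?_) h2 (h1'.add h3)
  by_cases hj : j ∈ Finset.range J
  · simp only [hj, if_true]
    have := mul_nonneg (hl j).le (sq_nonneg (‖⟪e j, x⟫_ℂ‖))
    linarith
  · simp only [hj, if_false, add_zero]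
    have : lam J ≤ lam j := hmono (by simpa using hj)
    exact mul_le_mul_of_nonneg_right this (sq_nonneg _)

end Basic

section Density
open Filter Topology

variable {H : Type*} [NormedAddCommGroup H] [InnerProductSpace ℂ H]

/-- averaged density form -/
noncomputable def rho (m : ℕ) (a : ℕ → H) (x y : H) : ℂ :=
  ((m : ℂ) + 1)⁻¹ * ∑ k ∈ Finset.range (m + 1), ⟪x, a k⟫_ℂ * ⟪a k, y⟫_ℂ

/-- diagonal of the averaged density form -/
noncomputable def qd (m : ℕ) (a : ℕ → H) (x : H) : ℝ :=
  ((m : ℝ) + 1)⁻¹ * ∑ k ∈ Finset.range (m + 1), ‖⟪x, a k⟫_ℂ‖ ^ 2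

lemma rho_self (m : ℕ) (a : ℕ → H) (x : H) : rho m a x x = (qd m a x : ℂ) := by
  unfold rho qd
  push_cast
  congr 1
  refine Finset.sum_congr rfl fun k _ => ?_
  rw [← inner_conj_symm (a k) x, Complex.mul_conj, Complex.normSq_eq_norm_sq]
  push_cast; rfl

lemma rho_conj (m : ℕ) (a : ℕ → H) (x y : H) :
    (starRingEnd ℂ) (rho m a x y) = rho m a y x := by
  unfold rho
  simp only [map_mul, map_inv₀, map_add, map_natCast, map_one, map_sum, inner_conj_symm]
  congr 1
  exact Finset.sum_congr rfl fun k _ => mul_comm _ _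

lemma qd_nonneg (m : ℕ) (a : ℕ → H) (x : H) : 0 ≤ qd m a x := by
  unfold qd; positivity

lemma qd_le (m : ℕ) (a : ℕ → H) (ha : ∀ k ≤ m, ‖a k‖ ≤ 1) (x : H) :
    qd m a x ≤ ‖x‖ ^ 2 := by
  unfold qd
  rw [inv_mul_le_iff₀ (by positivity)]
  have : ∀ k ∈ Finset.range (m + 1), ‖⟪x, a k⟫_ℂ‖ ^ 2 ≤ ‖x‖ ^ 2 := by
    intro k hk
    have h1 := norm_inner_le_norm (𝕜 := ℂ) x (a k)
    have h2 := ha k (by simpa [Nat.lt_succ_iff] using hk)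
    have : ‖⟪x, a k⟫_ℂ‖ ≤ ‖x‖ := h1.trans (mul_le_of_le_one_right (norm_nonneg _) h2)
    gcongr
  have := Finset.sum_le_card_nsmul _ _ _ this
  simpa using this

lemma rho_sq_le (m : ℕ) (a : ℕ → H) (x y : H) :
    ‖rho m a x y‖ ^ 2 ≤ qd m a x * qd m a y := by
  unfold rho qd
  have h1 : ‖∑ k ∈ Finset.range (m + 1), ⟪x, a k⟫_ℂ * ⟪a k, y⟫_ℂ‖ ≤
      ∑ k ∈ Finset.range (m + 1), ‖⟪x, a k⟫_ℂ‖ * ‖⟪y, a k⟫_ℂ‖ := by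
    refine (norm_sum_le _ _).trans (Finset.sum_le_sum fun k _ => ?_)
    rw [norm_mul, norm_inner_symm (a k) y]
  have h2 := Finset.sum_mul_sq_le_sq_mul_sq (Finset.range (m + 1))
    (fun k => ‖⟪x, a k⟫_ℂ‖) (fun k => ‖⟪y, a k⟫_ℂ‖)
  have h3 : ‖((m : ℂ) + 1)⁻¹‖ = ((m : ℝ) + 1)⁻¹ := by
    rw [norm_inv]; norm_cast
  rw [norm_mul, h3, mul_pow]
  have h4 := (pow_le_pow_left₀ (norm_nonneg _) h1 2).trans h2
  calc _ ≤ (((m : ℝ) + 1)⁻¹) ^ 2 * _ := mul_le_mul_of_nonneg_left h4 (by positivity)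
    _ = _ := by ring

lemma rho_le (m : ℕ) (a : ℕ → H) (ha : ∀ k ≤ m, ‖a k‖ ≤ 1) (x y : H) :
    ‖rho m a x y‖ ≤ ‖x‖ * ‖y‖ := by
  refine abs_le_of_sq_le_sq' ?_ (by positivity) |>.2
  rw [mul_pow]
  exact (rho_sq_le m a x y).trans
    (mul_le_mul (qd_le m a ha x) (qd_le m a ha y) (qd_nonneg _ _ _) (by positivity))

lemma rho_add_right (m : ℕ) (a : ℕ → H) (x y z : H) :
    rho m a x (y + z) = rho m a x y + rho m a x z := by
  unfold rho
  simp only [inner_add_right, mul_add, Finset.sum_add_distrib]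

lemma rho_smul_right (m : ℕ) (a : ℕ → H) (x y : H) (c : ℂ) :
    rho m a x (c • y) = c * rho m a x y := by
  unfold rho
  simp only [inner_smul_right, Finset.mul_sum]
  exact Finset.sum_congr rfl fun k _ => by ring

lemma rho_add_left (m : ℕ) (a : ℕ → H) (x y z : H) :
    rho m a (x + y) z = rho m a x z + rho m a y z := by
  unfold rho
  simp only [inner_add_left, add_mul, mul_add, Finset.sum_add_distrib]

lemma rho_smul_left (m : ℕ) (a : ℕ → H) (x y : H) (c : ℂ) :
    rho m a (c • x) y = (starRingEnd ℂ) c * rho m a x y := by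
  unfold rho
  simp only [inner_smul_left, Finset.mul_sum]
  exact Finset.sum_congr rfl fun k _ => by ring

lemma rho_invariant (m : ℕ) (a : ℕ → H) (ha : ∀ k ≤ m, ‖a k‖ ≤ 1) (V : H →L[ℂ] H)
    (hV : ∀ x y, ⟪V x, V y⟫_ℂ = ⟪x, y⟫_ℂ) {D : ℝ}
    (hD : ∑ k ∈ Finset.range m, ‖a (k + 1) - V (a k)‖ ^ 2 ≤ D) (x y : H) :
    ‖rho m a (V x) (V y) - rho m a x y‖ ≤
      (2 * (1 / ((m : ℝ) + 1)) + 2 * (√D * √(1 / ((m : ℝ) + 1)))) * (‖x‖ * ‖y‖) := by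
  have hVn : ∀ z, ‖V z‖ = ‖z‖ := fun z => by
    have := hV z z
    rw [inner_self_eq_norm_sq_to_K, inner_self_eq_norm_sq_to_K] at this
    have h2 : ‖V z‖ ^ 2 = ‖z‖ ^ 2 := by exact_mod_cast this
    exact (sq_eq_sq₀ (norm_nonneg _) (norm_nonneg _)).1 h2
  have hD0 : 0 ≤ D := (Finset.sum_nonneg fun k _ => sq_nonneg _).trans hD
  -- sum of errors
  have hs : ∑ k ∈ Finset.range m, ‖a (k + 1) - V (a k)‖ ≤ √D * √((m : ℝ) + 1) := by
    rw [← Real.sqrt_mul hD0]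
    apply Real.le_sqrt_of_sq_le
    have := sq_sum_le_card_mul_sum_sq (s := Finset.range m)
      (f := fun k => ‖a (k + 1) - V (a k)‖)
    rw [Finset.card_range] at this
    nlinarith [(Nat.cast_nonneg m : (0 : ℝ) ≤ m)]
  have hterm : ∀ u ∈ Finset.range m,
      ‖⟪V x, a (u + 1)⟫_ℂ * ⟪a (u + 1), V y⟫_ℂ - ⟪x, a u⟫_ℂ * ⟪a u, y⟫_ℂ‖ ≤
        2 * ‖a (u + 1) - V (a u)‖ * (‖x‖ * ‖y‖) := by
    intro k hk
    have hk' : k < m := Finset.mem_range.1 hk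
    have e1 : ⟪V x, a (k + 1)⟫_ℂ * ⟪a (k + 1), V y⟫_ℂ - ⟪x, a k⟫_ℂ * ⟪a k, y⟫_ℂ =
        ⟪V x, a (k + 1) - V (a k)⟫_ℂ * ⟪a (k + 1), V y⟫_ℂ +
        ⟪x, a k⟫_ℂ * ⟪a (k + 1) - V (a k), V y⟫_ℂ := by
      rw [inner_sub_right, inner_sub_left, hV, hV]; ring
    rw [e1]
    refine (norm_add_le _ _).trans ?_
    rw [norm_mul, norm_mul]
    have b1 := norm_inner_le_norm (𝕜 := ℂ) (V x) (a (k + 1) - V (a k))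
    have b2 := norm_inner_le_norm (𝕜 := ℂ) (a (k + 1)) (V y)
    have b3 := norm_inner_le_norm (𝕜 := ℂ) x (a k)
    have b4 := norm_inner_le_norm (𝕜 := ℂ) (a (k + 1) - V (a k)) (V y)
    rw [hVn] at b1 b2 b4
    have b2' : ‖⟪a (k + 1), V y⟫_ℂ‖ ≤ ‖y‖ :=
      b2.trans (mul_le_of_le_one_left (norm_nonneg _) (ha _ hk'))
    have b3' : ‖⟪x, a k⟫_ℂ‖ ≤ ‖x‖ :=
      b3.trans (mul_le_of_le_one_right (norm_nonneg _) (ha _ hk'.le))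
    have c1 := mul_le_mul b1 b2' (norm_nonneg _) (by positivity)
    have c2 := mul_le_mul b3' b4 (norm_nonneg _) (by positivity)
    linarith
  have hend : ∀ k ≤ m, ∀ x y : H, ‖⟪x, a k⟫_ℂ * ⟪a k, y⟫_ℂ‖ ≤ ‖x‖ * ‖y‖ := by
    intro k hk x y
    rw [norm_mul]
    have b2 := norm_inner_le_norm (𝕜 := ℂ) (a k) y
    have b3 := norm_inner_le_norm (𝕜 := ℂ) x (a k)
    exact mul_le_mul (b3.trans (mul_le_of_le_one_right (norm_nonneg _) (ha _ hk)))
      (b2.trans (mul_le_of_le_one_left (norm_nonneg _) (ha _ hk))) (norm_nonneg _) (norm_nonneg _)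
  have key : rho m a (V x) (V y) - rho m a x y = ((m : ℂ) + 1)⁻¹ *
      (∑ k ∈ Finset.range m,
        (⟪V x, a (k + 1)⟫_ℂ * ⟪a (k + 1), V y⟫_ℂ - ⟪x, a k⟫_ℂ * ⟪a k, y⟫_ℂ)
       + ⟪V x, a 0⟫_ℂ * ⟪a 0, V y⟫_ℂ - ⟪x, a m⟫_ℂ * ⟪a m, y⟫_ℂ) := by
    unfold rho
    rw [Finset.sum_range_succ' (fun k => ⟪V x, a k⟫_ℂ * ⟪a k, V y⟫_ℂ), Finset.sum_range_succ,
      Finset.sum_sub_distrib]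
    ring
  have h3 : ‖((m : ℂ) + 1)⁻¹‖ = ((m : ℝ) + 1)⁻¹ := by
    rw [norm_inv]; norm_cast
  rw [key, norm_mul, h3]
  have hsum := norm_sum_le_of_le _ hterm
  rw [← Finset.sum_mul, ← Finset.mul_sum] at hsum
  have e0 := hend 0 (Nat.zero_le _) (V x) (V y)
  rw [hVn, hVn] at e0
  have em := hend m le_rfl x y
  have htot := (norm_sub_le (∑ k ∈ Finset.range m,
        (⟪V x, a (k + 1)⟫_ℂ * ⟪a (k + 1), V y⟫_ℂ - ⟪x, a k⟫_ℂ * ⟪a k, y⟫_ℂ)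
       + ⟪V x, a 0⟫_ℂ * ⟪a 0, V y⟫_ℂ) (⟪x, a m⟫_ℂ * ⟪a m, y⟫_ℂ)).trans
       (add_le_add (norm_add_le _ _) le_rfl)
  have hxy : 0 ≤ ‖x‖ * ‖y‖ := by positivity
  have hfin := htot.trans (add_le_add (add_le_add hsum e0) em)
  have hfin2 := hfin.trans (show _ ≤ (2 + 2 * (√D * √((m : ℝ) + 1))) * (‖x‖ * ‖y‖) by
    nlinarith [mul_le_mul_of_nonneg_right hs hxy])
  refine (mul_le_mul_of_nonneg_left hfin2 (by positivity)).trans (le_of_eq ?_)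
  have hm : (0 : ℝ) < (m : ℝ) + 1 := by positivity
  have hsq : ((m : ℝ) + 1)⁻¹ * √((m : ℝ) + 1) = √(1 / ((m : ℝ) + 1)) := by
    rw [one_div, Real.sqrt_inv]
    have := Real.mul_self_sqrt hm.le
    have hp := Real.sqrt_pos.2 hm
    field_simp
    nlinarith
  rw [← hsq]
  ring

lemma ultra_lim (f : ℕ → ℂ) (c : ℝ) (h : ∀ n, ‖f n‖ ≤ c) :
    ∃ l, Tendsto f (hyperfilter ℕ : Filter ℕ) (𝓝 l) := by
  have hc := isCompact_closedBall (0 : ℂ) c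
  have := hc.ultrafilter_le_nhds ((hyperfilter ℕ).map f) (by
    rw [le_principal_iff]
    exact Filter.mem_map.2 (univ_mem' fun n => by simpa using h n))
  obtain ⟨l, -, hl⟩ := this
  exact ⟨l, hl⟩

end Density

section Abstract
open Filter Topology

variable {H : Type*} [NormedAddCommGroup H] [InnerProductSpace ℂ H] [CompleteSpace H]

lemma weighted_qd (e : HilbertBasis ℕ ℂ H) {lam : ℕ → ℝ} (hl : ∀ j, 0 < lam j)
    (m : ℕ) (a : ℕ → H) {C : ℝ} (hmem : ∀ k ≤ m, MemH1 e lam (a k))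
    (hC : ∑ k ∈ Finset.range (m + 1), h1 e lam (a k) ≤ C * ((m : ℝ) + 1)) (F : Finset ℕ) :
    ∑ j ∈ F, lam j * qd m a (e j) ≤ C := by
  have e1 : ∑ j ∈ F, lam j * qd m a (e j) = ((m : ℝ) + 1)⁻¹ *
      ∑ k ∈ Finset.range (m + 1), ∑ j ∈ F, lam j * ‖⟪e j, a k⟫_ℂ‖ ^ 2 := by
    unfold qd
    rw [Finset.sum_comm, Finset.mul_sum]
    refine Finset.sum_congr rfl fun j _ => ?_
    rw [← Finset.mul_sum]; ring
  rw [e1, inv_mul_le_iff₀ (by positivity), mul_comm]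
  refine le_trans (Finset.sum_le_sum fun k hk => ?_) hC
  exact ((memH1_iff hl).1 (hmem k (by simpa [Nat.lt_succ_iff] using hk))).sum_le_tsum F
    fun j _ => mul_nonneg (hl j).le (sq_nonneg _)

lemma lower_qd (e : HilbertBasis ℕ ℂ H) {lam : ℕ → ℝ} (hl : ∀ j, 0 < lam j)
    (hmono : Monotone lam)
    (m : ℕ) (a : ℕ → H) {C δ : ℝ} (hδ : 0 < δ) (hmem : ∀ k ≤ m, MemH1 e lam (a k))
    (hlow : ∀ k ≤ m, δ ≤ ‖a k‖)
    (hC : ∑ k ∈ Finset.range (m + 1), h1 e lam (a k) ≤ C * ((m : ℝ) + 1)) (J : ℕ) :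
    lam J * δ ^ 2 ≤ C + lam J * ∑ j ∈ Finset.range J, qd m a (e j) := by
  have e1 : ∑ j ∈ Finset.range J, qd m a (e j) = ((m : ℝ) + 1)⁻¹ *
      ∑ k ∈ Finset.range (m + 1), ∑ j ∈ Finset.range J, ‖⟪e j, a k⟫_ℂ‖ ^ 2 := by
    unfold qd
    rw [Finset.sum_comm, Finset.mul_sum]
  have h : ∑ k ∈ Finset.range (m + 1), lam J * δ ^ 2 ≤ ∑ k ∈ Finset.range (m + 1),
      (h1 e lam (a k) + lam J * ∑ j ∈ Finset.range J, ‖⟪e j, a k⟫_ℂ‖ ^ 2) := by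
    refine Finset.sum_le_sum fun k hk => ?_
    have hk' : k ≤ m := by simpa [Nat.lt_succ_iff] using hk
    refine le_trans ?_ (tail_bound e hl hmono (hmem k hk') J)
    have := hlow k hk'
    have := hl J
    gcongr
  rw [Finset.sum_const, Finset.card_range, Finset.sum_add_distrib, ← Finset.mul_sum,
    nsmul_eq_mul] at h
  push_cast at h
  have hm : (0 : ℝ) < (m : ℝ) + 1 := by positivity
  rw [e1]
  have h2 : ((m : ℝ) + 1) * (lam J * δ ^ 2) ≤ ((m : ℝ) + 1) * (C + lam J * (((m : ℝ) + 1)⁻¹ *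
      ∑ k ∈ Finset.range (m + 1), ∑ j ∈ Finset.range J, ‖⟪e j, a k⟫_ℂ‖ ^ 2)) := by
    refine (h.trans (add_le_add hC le_rfl)).trans (le_of_eq ?_)
    field_simp
  exact le_of_mul_le_mul_left h2 hm

theorem exists_eigenvector (e : HilbertBasis ℕ ℂ H) {lam : ℕ → ℝ} (hl : ∀ j, 0 < lam j)
    (hmono : Monotone lam) (htop : Tendsto lam atTop atTop)
    (V : H →L[ℂ] H) (hV : ∀ x y, ⟪V x, V y⟫_ℂ = ⟪x, y⟫_ℂ) (hVs : Function.Surjective V)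
    {C D δ : ℝ} (hδ : 0 < δ) (m : ℕ → ℕ) (hm : Tendsto m atTop atTop) (a : ℕ → ℕ → H)
    (ha : ∀ n, ∀ k ≤ m n, ‖a n k‖ ≤ 1) (hlow : ∀ n, ∀ k ≤ m n, δ ≤ ‖a n k‖)
    (hmem : ∀ n, ∀ k ≤ m n, MemH1 e lam (a n k))
    (hC : ∀ n, ∑ k ∈ Finset.range (m n + 1), h1 e lam (a n k) ≤ C * ((m n : ℝ) + 1))
    (hD : ∀ n, ∑ k ∈ Finset.range (m n), ‖a n (k + 1) - V (a n k)‖ ^ 2 ≤ D) :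
    ∃ x : H, x ≠ 0 ∧ (∃ μ : ℂ, V x = μ • x) ∧ MemH1 e lam x := by
  have hex : ∀ x y : H, ∃ l, Tendsto (fun n => rho (m n) (a n) x y)
      (hyperfilter ℕ : Filter ℕ) (𝓝 l) := fun x y =>
    ultra_lim _ (‖x‖ * ‖y‖) fun n => rho_le _ _ (ha n) x y
  choose ρ hρ using hex
  let Bl : H →ₗ⋆[ℂ] H →ₗ[ℂ] ℂ := LinearMap.mk₂'ₛₗ (starRingEnd ℂ) (RingHom.id ℂ) ρ
    (fun x y z => tendsto_nhds_unique (hρ _ _)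
      (by simpa only [rho_add_left] using (hρ x z).add (hρ y z)))
    (fun c x y => tendsto_nhds_unique (hρ _ _)
      (by simpa only [rho_smul_left, smul_eq_mul] using (hρ x y).const_mul ((starRingEnd ℂ) c)))
    (fun x y z => tendsto_nhds_unique (hρ _ _)
      (by simpa only [rho_add_right] using (hρ x y).add (hρ x z)))
    (fun c x y => tendsto_nhds_unique (hρ _ _)
      (by simpa only [rho_smul_right, smul_eq_mul, RingHom.id_apply] using (hρ x y).const_mul c))
  have hBl : ∀ x y, ‖Bl x y‖ ≤ 1 * ‖x‖ * ‖y‖ := fun x y => by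
    rw [one_mul]
    exact le_of_tendsto (hρ x y).norm (Eventually.of_forall fun n => rho_le _ _ (ha n) x y)
  let R : H →L[ℂ] H := InnerProductSpace.continuousLinearMapOfBilin (Bl.mkContinuous₂ 1 hBl)
  have hR : ∀ x y, ⟪R x, y⟫_ℂ = ρ x y := fun x y => by
    simp only [R, InnerProductSpace.continuousLinearMapOfBilin_apply]
    rfl
  have hconj : ∀ x y, (starRingEnd ℂ) (ρ x y) = ρ y x := fun x y => by
    refine tendsto_nhds_unique ?_ (hρ y x)
    have := (Complex.continuous_conj.tendsto _).comp (hρ x y)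
    refine this.congr fun n => ?_
    exact rho_conj _ _ _ _
  have hR' : ∀ x y, ⟪x, R y⟫_ℂ = ρ x y := fun x y => by
    rw [← inner_conj_symm, hR, hconj]
  have hsymm : R.IsSymmetric := fun x y => by
    exact (hR x y).trans (hR' x y).symm
  -- invariance
  have hm' : Tendsto m (hyperfilter ℕ : Filter ℕ) atTop :=
    hm.mono_left (Nat.hyperfilter_le_atTop)
  have hinv : ∀ x y, ρ (V x) (V y) = ρ x y := by
    intro x y
    have t1 := (hρ (V x) (V y)).sub (hρ x y)
    have t0 : Tendsto (fun n : ℕ => (2 * (1 / ((n : ℝ) + 1)) + 2 * (√D * √(1 / ((n : ℝ) + 1))))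
        * (‖x‖ * ‖y‖)) atTop (𝓝 0) := by
      have b1 := tendsto_one_div_add_atTop_nhds_zero_nat (𝕜 := ℝ)
      have b2 := b1.sqrt
      have := (((b1.const_mul 2).add ((b2.const_mul (√D)).const_mul 2)).mul_const (‖x‖ * ‖y‖))
      simpa using this
    have t2 := squeeze_zero_norm
      (fun n => rho_invariant (m n) (a n) (ha n) V hV (hD n) x y) (t0.comp hm')
    exact sub_eq_zero.1 (tendsto_nhds_unique t1 t2)
  have hcomm : ∀ x, R (V x) = V (R x) := by
    intro x
    refine ext_inner_right ℂ fun y => ?_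
    obtain ⟨y, rfl⟩ := hVs y
    rw [hR, hinv, hV, hR]
  -- diagonal
  let r : ℕ → ℝ := fun j => (ρ (e j) (e j)).re
  have hr : ∀ j, Tendsto (fun n => qd (m n) (a n) (e j)) (hyperfilter ℕ : Filter ℕ) (𝓝 (r j)) := by
    intro j
    have := (Complex.continuous_re.tendsto _).comp (hρ (e j) (e j))
    refine this.congr fun n => ?_
    simp [rho_self]
  have hr0 : ∀ j, 0 ≤ r j := fun j =>
    ge_of_tendsto (hr j) (Eventually.of_forall fun n => qd_nonneg _ _ _)
  have hrsum : ∀ F : Finset ℕ, ∑ j ∈ F, lam j * r j ≤ C := fun F =>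
    le_of_tendsto (tendsto_finsetSum F fun j _ => (hr j).const_mul (lam j))
      (Eventually.of_forall fun n => weighted_qd e hl _ _ (hmem n) (hC n) F)
  have hrlow : ∀ J, lam J * δ ^ 2 ≤ C + lam J * ∑ j ∈ Finset.range J, r j := fun J =>
    ge_of_tendsto (((tendsto_finsetSum (Finset.range J) fun j _ => (hr j)).const_mul
      (lam J)).const_add C)
      (Eventually.of_forall fun n => lower_qd e hl hmono _ _ hδ (hmem n) (hlow n) (hC n) J)
  have hrsummable : Summable fun j => lam j * r j :=
    summable_of_sum_le (fun j => mul_nonneg (hl j).le (hr0 j)) hrsum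
  have hcoef : ∀ j x, ‖⟪e j, R x⟫_ℂ‖ ^ 2 ≤ r j * ‖x‖ ^ 2 := by
    intro j x
    rw [hR']
    refine le_of_tendsto_of_tendsto ((hρ (e j) x).norm.pow 2) ((hr j).mul_const _)
      (Eventually.of_forall fun n => ?_)
    exact (rho_sq_le _ _ _ _).trans
      (mul_le_mul_of_nonneg_left (qd_le _ _ (ha n) x) (qd_nonneg _ _ _))
  have hRmem : ∀ x, MemH1 e lam (R x) := by
    intro x
    rw [memH1_iff hl]
    refine Summable.of_nonneg_of_le (fun j => mul_nonneg (hl j).le (sq_nonneg _)) (fun j => ?_)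
      (hrsummable.mul_right (‖x‖ ^ 2))
    have := mul_le_mul_of_nonneg_left (hcoef j x) (hl j).le
    linarith
  have hRh1 : ∀ x, h1 e lam (R x) ≤ C * ‖x‖ ^ 2 := by
    intro x
    have s1 : ∑' j, lam j * r j ≤ C := hrsummable.tsum_le_of_sum_le hrsum
    refine le_trans ?_ (mul_le_mul_of_nonneg_right s1 (sq_nonneg _))
    rw [← tsum_mul_right]
    refine Summable.tsum_le_tsum (fun j => ?_) ((memH1_iff hl).1 (hRmem x))
      (hrsummable.mul_right (‖x‖ ^ 2))
    have := mul_le_mul_of_nonneg_left (hcoef j x) (hl j).le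
    linarith
  have hC0 : 0 ≤ C := by simpa using hrsum ∅
  -- nonzero
  have hRne : R ≠ 0 := by
    intro h0
    have hr00 : ∀ j, r j = 0 := fun j => by
      simp only [r]; rw [← hR, h0]; simp
    obtain ⟨J, hJ⟩ := (htop.eventually_gt_atTop (C / δ ^ 2)).exists
    have := hrlow J
    simp only [hr00, Finset.sum_const_zero, mul_zero, add_zero] at this
    rw [div_lt_iff₀ (by positivity)] at hJ
    linarith
  -- compactness
  have hcpt : IsCompactOperator R := by
    let P : ℕ → H →L[ℂ] H := fun J =>
      ∑ j ∈ Finset.range J, ((innerSL ℂ (e j)).smulRight (e j))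
    have hP : ∀ J z, P J z = ∑ j ∈ Finset.range J, ⟪e j, z⟫_ℂ • e j := fun J z => by
      simp [P]
    have hPc : ∀ J, IsCompactOperator (P J ∘L R) := by
      intro J
      have : IsCompactOperator (P J) := by
        have hmem : P J ∈ compactOperator (RingHom.id ℂ) H H := by
          refine Submodule.sum_mem _ fun j _ => ?_
          change IsCompactOperator ((innerSL ℂ (e j)).smulRight (e j))
          have h1 : IsCompactOperator (innerSL ℂ (e j)) :=
            (isCompactOperator_id (E := ℂ)).comp_clm (innerSL ℂ (e j))
          exact h1.continuous_comp (g := fun c : ℂ => c • e j) (by fun_prop)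
        exact hmem
      exact this.comp_clm R
    have hcoefP : ∀ J z i, ⟪e i, z - P J z⟫_ℂ = if i < J then 0 else ⟪e i, z⟫_ℂ := by
      intro J z i
      rw [hP, inner_sub_right, inner_sum]
      have : ∀ j, ⟪e i, ⟪e j, z⟫_ℂ • e j⟫_ℂ = if i = j then ⟪e j, z⟫_ℂ else 0 := by
        intro j
        rw [inner_smul_right, orthonormal_iff_ite.1 e.orthonormal i j]
        split_ifs <;> simp
      simp only [this, Finset.sum_ite_eq, Finset.mem_range]
      split_ifs <;> simp
    have hbound : ∀ J x, ‖R x - P J (R x)‖ ^ 2 ≤ (C / lam J) * ‖x‖ ^ 2 := by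
      intro J x
      have hle : ∀ i, lam i * ‖⟪e i, R x - P J (R x)⟫_ℂ‖ ^ 2 ≤ lam i * ‖⟪e i, R x⟫_ℂ‖ ^ 2 := by
        intro i
        rw [hcoefP]
        have := mul_nonneg (hl i).le (sq_nonneg (‖⟪e i, R x⟫_ℂ‖))
        split_ifs
        · simpa using this
        · exact le_rfl
      have hs1 := (memH1_iff hl).1 (hRmem x)
      have hs2 : Summable fun i => lam i * ‖⟪e i, R x - P J (R x)⟫_ℂ‖ ^ 2 :=
        Summable.of_nonneg_of_le (fun i => mul_nonneg (hl i).le (sq_nonneg _)) hle hs1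
      have ht := tail_bound e hl hmono ((memH1_iff hl).2 hs2) J
      have hz : ∑ j ∈ Finset.range J, ‖⟪e j, R x - P J (R x)⟫_ℂ‖ ^ 2 = 0 := by
        refine Finset.sum_eq_zero fun j hj => ?_
        rw [hcoefP, if_pos (Finset.mem_range.1 hj)]; simp
      rw [hz, mul_zero, add_zero] at ht
      have h3 := ht.trans ((Summable.tsum_le_tsum hle hs2 hs1).trans (hRh1 x))
      rw [div_mul_eq_mul_div, le_div_iff₀ (hl J)]
      linarith
    have hconv : Tendsto (fun J => P J ∘L R) atTop (𝓝 R) := by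
      rw [tendsto_iff_norm_sub_tendsto_zero]
      have t0 : Tendsto (fun J => √(C / lam J)) atTop (𝓝 0) := by
        simpa using (htop.const_div_atTop C).sqrt
      refine squeeze_zero (fun _ => norm_nonneg _) (fun J => ?_) t0
      refine ContinuousLinearMap.opNorm_le_bound _ (Real.sqrt_nonneg _) fun x => ?_
      have hb := hbound J x
      have : ‖(P J ∘L R - R) x‖ = ‖R x - P J (R x)‖ := by
        rw [norm_sub_rev]; rfl
      rw [this]
      refine abs_le_of_sq_le_sq' ?_ (by positivity) |>.2
      rw [mul_pow, Real.sq_sqrt (div_nonneg hC0 (hl J).le)]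
      exact hb
    exact isClosed_setOfPred_isCompactOperator.mem_of_tendsto hconv
      (Eventually.of_forall hPc)
  -- eigenvector of R
  have hnot := mt (ContinuousLinearMap.eq_zero_of_forall_hasEigenvalue_eq_zero hcpt hsymm).1 hRne
  push Not at hnot
  obtain ⟨μ, hμ, hμ0⟩ := hnot
  let E := Module.End.eigenspace (R : Module.End ℂ H) μ
  have : FiniteDimensional ℂ E := ContinuousLinearMap.finite_dimensional_eigenspace hcpt μ hμ0
  have : Nontrivial E := Submodule.nontrivial_iff_ne_bot.2 hμ
  have hE : ∀ x ∈ E, (V : H →ₗ[ℂ] H) x ∈ E := by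
    intro x hx
    have hx' : R x = μ • x := Module.End.mem_eigenspace_iff.1 hx
    refine Module.End.mem_eigenspace_iff.2 ?_
    change R (V x) = μ • V x
    rw [hcomm, hx', map_smul]
  obtain ⟨ν, hν⟩ := Module.End.exists_eigenvalue ((V : H →ₗ[ℂ] H).restrict hE)
  obtain ⟨x, hx⟩ := hν.exists_hasEigenvector
  refine ⟨x, fun h => hx.2 (Subtype.ext h), ⟨ν, ?_⟩, ?_⟩
  · have := congrArg Subtype.val hx.apply_eq_smul
    exact this
  · have hx' : R x = μ • (x : H) := Module.End.mem_eigenspace_iff.1 x.2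
    have : (x : H) = R (μ⁻¹ • (x : H)) := by
      rw [map_smul, hx', smul_smul, inv_mul_cancel₀ hμ0, one_smul]
    rw [this]
    exact hRmem _

end Abstract

section Evolution
open Filter Topology

variable {H : Type*} [NormedAddCommGroup H] [InnerProductSpace ℂ H] [CompleteSpace H]

lemma hasDerivAt_normSq {f : ℝ → H} {f' : H} {t : ℝ} (h : HasDerivAt f f' t) :
    HasDerivAt (fun s => ‖f s‖ ^ 2) (2 * (⟪f t, f'⟫_ℂ).re) t := by
  have h1 := h.inner ℂ h
  have h2 := Complex.reCLM.hasFDerivAt.comp_hasDerivAt t h1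
  have e1 : (fun s => ‖f s‖ ^ 2) = (Complex.reCLM ∘ fun s => ⟪f s, f s⟫_ℂ) := by
    funext s
    simp only [Function.comp, Complex.reCLM_apply]
    rw [inner_self_eq_norm_sq_to_K]
    norm_cast
  have e2 : Complex.reCLM (⟪f t, f'⟫_ℂ + ⟪f', f t⟫_ℂ) = 2 * (⟪f t, f'⟫_ℂ).re := by
    rw [← inner_conj_symm f' (f t)]
    simp only [Complex.reCLM_apply, Complex.add_re, Complex.conj_re]
    ring
  rw [e1, ← e2]
  exact h2

lemma antisym {T : H →ₗ[ℂ] H} {x : H} (h : ⟪T x, x⟫_ℂ = ⟪x, T x⟫_ℂ) :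
    (⟪x, Complex.I • T x⟫_ℂ).re = 0 := by
  have h1 := congrArg Complex.im h
  rw [← inner_conj_symm (T x) x, Complex.conj_im] at h1
  rw [inner_smul_right, Complex.mul_re]
  simp
  linarith

lemma re_real_smul (x y : H) (c : ℝ) : (⟪x, c • y⟫_ℂ).re = c * (⟪x, y⟫_ℂ).re := by
  rw [← Complex.coe_smul, inner_smul_right, Complex.re_ofReal_mul]

lemma adj_left {T : H →L[ℂ] H} (h : ∀ x y, ⟪T x, T y⟫_ℂ = ⟪x, y⟫_ℂ) (x : H) :
    ContinuousLinearMap.adjoint T (T x) = x := by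
  refine ext_inner_right ℂ fun y => ?_
  rw [ContinuousLinearMap.adjoint_inner_left, h]

lemma adj_right {T : H →L[ℂ] H} (h : ∀ x y, ⟪T x, T y⟫_ℂ = ⟪x, y⟫_ℂ)
    (hs : Function.Surjective T) (x : H) : T (ContinuousLinearMap.adjoint T x) = x := by
  obtain ⟨y, rfl⟩ := hs x
  rw [adj_left h]

lemma iso_norm {T : H →L[ℂ] H} (h : ∀ x y, ⟪T x, T y⟫_ℂ = ⟪x, y⟫_ℂ) (z : H) : ‖T z‖ = ‖z‖ := by
  have := h z z
  rw [inner_self_eq_norm_sq_to_K, inner_self_eq_norm_sq_to_K] at this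
  have h2 : ‖T z‖ ^ 2 = ‖z‖ ^ 2 := by exact_mod_cast this
  exact (sq_eq_sq₀ (norm_nonneg _) (norm_nonneg _)).1 h2

lemma adj_norm {T : H →L[ℂ] H} (h : ∀ x y, ⟪T x, T y⟫_ℂ = ⟪x, y⟫_ℂ)
    (hs : Function.Surjective T) (x : H) : ‖ContinuousLinearMap.adjoint T x‖ = ‖x‖ := by
  rw [← iso_norm h, adj_right h hs]

lemma U_period (e : HilbertBasis ℕ ℂ H) {lam : ℕ → ℝ} (hl : ∀ j, 0 < lam j)
    (L : ℝ → H →ₗ[ℂ] H)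
    (hLsym : ∀ t : ℝ, ∀ x y : H, MemH1 (⇑e) lam x → MemH1 (⇑e) lam y →
      ⟪L t x, y⟫_ℂ = ⟪x, L t y⟫_ℂ)
    (hLper : ∀ t : ℝ, L (t + 1) = L t)
    (U : ℝ → H →L[ℂ] H)
    (hU0 : U 0 = ContinuousLinearMap.id ℂ H)
    (hUgen : ∀ ψ : H, MemH1 (⇑e) lam ψ → ∀ t : ℝ,
      HasDerivAt (fun s => U s ψ) (Complex.I • L t (U t ψ)) t)
    (hUm : ∀ t ψ, MemH1 (⇑e) lam ψ → MemH1 (⇑e) lam (U t ψ)) (t : ℝ) (x : H) :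
    U (t + 1) x = U t (U 1 x) := by
  have key : ∀ j, U (t + 1) (e j) = U t (U 1 (e j)) := by
    intro j
    have hj := memH1_basis e hl j
    have hd : ∀ s, HasDerivAt (fun s => ‖U (s + 1) (e j) - U s (U 1 (e j))‖ ^ 2) 0 s := by
      intro s
      have d1 : HasDerivAt (fun s => U (s + 1) (e j)) (Complex.I • L (s + 1) (U (s + 1) (e j))) s :=
        (hUgen (e j) hj (s + 1)).comp_add_const s 1
      have d2 := hUgen (U 1 (e j)) (hUm 1 _ hj) s
      have d3 := hasDerivAt_normSq (d1.sub d2)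
      convert! d3 using 1
      rw [hLper, ← smul_sub, ← map_sub]
      have hm := memH1_sub hl (hUm (s + 1) _ hj) (hUm s _ (hUm 1 _ hj))
      have := antisym (hLsym s _ _ hm hm)
      simp only [Pi.sub_apply]
      rw [this, mul_zero]
    have hc := is_const_of_deriv_eq_zero (fun s => (hd s).differentiableAt)
      (fun s => (hd s).deriv) t 0
    simp only [zero_add, hU0, ContinuousLinearMap.id_apply, sub_self, norm_zero] at hc
    have : ‖U (t + 1) (e j) - U t (U 1 (e j))‖ = 0 := by
      rw [← sq_eq_zero_iff]; simpa using hc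
    exact sub_eq_zero.1 (norm_eq_zero.1 this)
  have hden : Dense (Submodule.span ℂ (Set.range e) : Set H) :=
    (Submodule.dense_iff_topologicalClosure_eq_top).2 e.dense_span
  have : U (t + 1) = (U t).comp (U 1) := by
    refine ContinuousLinearMap.ext_on hden ?_
    rintro _ ⟨j, rfl⟩
    exact key j
  rw [this]; rfl

theorem solution_lemma (e : HilbertBasis ℕ ℂ H) {lam : ℕ → ℝ} (hl : ∀ j, 0 < lam j)
    (L : ℝ → H →ₗ[ℂ] H)
    (hLsym : ∀ t : ℝ, ∀ x y : H, MemH1 (⇑e) lam x → MemH1 (⇑e) lam y →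
      ⟪L t x, y⟫_ℂ = ⟪x, L t y⟫_ℂ)
    (hLper : ∀ t : ℝ, L (t + 1) = L t)
    (U : ℝ → H →L[ℂ] H)
    (hUiso : ∀ t : ℝ, ∀ x y : H, ⟪U t x, U t y⟫_ℂ = ⟪x, y⟫_ℂ)
    (hUsurj : ∀ t : ℝ, Function.Surjective (U t))
    (hUgen : ∀ ψ : H, MemH1 (⇑e) lam ψ → ∀ t : ℝ,
      HasDerivAt (fun s => U s ψ) (Complex.I • L t (U t ψ)) t)
    (hper : ∀ t x, U (t + 1) x = U t (U 1 x)) (hU0 : U 0 = ContinuousLinearMap.id ℂ H)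
    {M : ℝ}
    (hM : ∀ s t : ℝ, |t - s| ≤ 1 → ∀ ψ : H, MemH1 (⇑e) lam ψ →
      MemH1 (⇑e) lam (U t (ContinuousLinearMap.adjoint (U s) ψ)) ∧
      h1 e lam (U t (ContinuousLinearMap.adjoint (U s) ψ)) ≤ M ^ 2 * h1 e lam ψ)
    {ε T δ : ℝ} (hε : 0 < ε) {φ : ℝ → H} (hφ0 : ‖φ 0‖ = 1)
    (hφc : ContinuousOn φ (Set.Icc 0 T))
    (hφm : ∀ t ∈ Set.Ioo 0 T, MemH2 (⇑e) lam (φ t))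
    (hφd : ∀ t ∈ Set.Ioo 0 T,
      HasDerivAt φ (Complex.I • L t (φ t) - ε • Gam (⇑e) lam (φ t)) t)
    (hφT : δ ≤ ‖φ T‖) {m : ℕ} (hm : (m : ℝ) + 1 ≤ T) :
    ∃ a : ℕ → H, (∀ k ≤ m, ‖a k‖ ≤ 1) ∧ (∀ k ≤ m, δ ≤ ‖a k‖) ∧
      (∀ k ≤ m, MemH1 e lam (a k)) ∧
      (2 * ε * ∑ k ∈ Finset.range (m + 1), h1 e lam (a k) ≤ M ^ 2) ∧
      (∑ k ∈ Finset.range m, ‖a (k + 1) - U 1 (a k)‖ ^ 2 ≤ M ^ 2 / 4) := by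
  have hm0 : (0 : ℝ) ≤ m := Nat.cast_nonneg m
  have hT : 0 ≤ T := by linarith
  have hen : ∀ t ∈ Set.Ioo 0 T, HasDerivAt (fun s => ‖φ s‖ ^ 2) (- 2 * ε * h1 e lam (φ t)) t := by
    intro t ht
    have hmem := memH2_memH1 e hl (hφm t ht)
    convert! hasDerivAt_normSq (hφd t ht) using 1
    rw [inner_sub_right, Complex.sub_re, antisym (hLsym t _ _ hmem hmem), re_real_smul,
      gam_self e (hφm t ht)]
    ring
  have hcont : ContinuousOn (fun s => ‖φ s‖ ^ 2) (Set.Icc 0 T) := hφc.norm.pow 2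
  have hanti : AntitoneOn (fun s => ‖φ s‖ ^ 2) (Set.Icc 0 T) := by
    refine antitoneOn_of_deriv_nonpos (convex_Icc 0 T) hcont ?_ ?_
    · rw [interior_Icc]
      exact fun t ht => (hen t ht).differentiableAt.differentiableWithinAt
    · rw [interior_Icc]
      intro t ht
      rw [(hen t ht).deriv]
      nlinarith [h1_nonneg (e := e) hl (φ t), mul_nonneg hε.le (h1_nonneg (e := e) hl (φ t))]
  have hup : ∀ t ∈ Set.Icc 0 T, ‖φ t‖ ≤ 1 := by
    intro t ht
    have := hanti (Set.left_mem_Icc.2 hT) ht ht.1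
    simp only [hφ0] at this
    exact (sq_le_sq₀ (norm_nonneg _) zero_le_one).1 this
  have hdown : ∀ t ∈ Set.Icc 0 T, δ ≤ ‖φ t‖ := by
    intro t ht
    have := hanti ht (Set.right_mem_Icc.2 hT) ht.2
    exact hφT.trans ((sq_le_sq₀ (norm_nonneg _) (norm_nonneg _)).1 this)
  -- choice of the offset
  have hks : ∀ k ≤ m, ∀ s ∈ Set.Ioo (0 : ℝ) 1, (k : ℝ) + s ∈ Set.Ioo 0 T := by
    intro k hk s hs
    have : (k : ℝ) ≤ m := by exact_mod_cast hk
    have h0 : (0 : ℝ) ≤ k := Nat.cast_nonneg k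
    exact ⟨by linarith [hs.1], by linarith [hs.2]⟩
  have hkm : ∀ k ∈ Finset.range (m + 1), k ≤ m := fun k hk => by
    simpa [Nat.lt_succ_iff] using hk
  obtain ⟨s, hs, hslope⟩ := exists_hasDerivAt_eq_slope
    (fun s => ∑ k ∈ Finset.range (m + 1), ‖φ ((k : ℝ) + s)‖ ^ 2)
    (fun s => ∑ k ∈ Finset.range (m + 1), - 2 * ε * h1 e lam (φ ((k : ℝ) + s)))
    (zero_lt_one' ℝ)
    (by
      refine continuousOn_finsetSum _ fun k hk => ?_
      refine hcont.comp (f := fun s : ℝ => (k : ℝ) + s) (by fun_prop) ?_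
      intro s hs
      have : (k : ℝ) ≤ m := by exact_mod_cast hkm k hk
      have h0 : (0 : ℝ) ≤ k := Nat.cast_nonneg k
      exact ⟨by linarith [hs.1], by linarith [hs.2]⟩)
    (by
      intro s hs
      refine HasDerivAt.fun_sum fun k hk => ?_
      exact (hen _ (hks k (hkm k hk) s hs)).comp_const_add (k : ℝ) s)
  have htel : (∑ k ∈ Finset.range (m + 1), ‖φ ((k : ℝ) + 1)‖ ^ 2) -
      ∑ k ∈ Finset.range (m + 1), ‖φ ((k : ℝ) + 0)‖ ^ 2 = ‖φ ((m : ℝ) + 1)‖ ^ 2 - 1 := by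
    rw [← Finset.sum_sub_distrib]
    have := Finset.sum_range_sub (fun k : ℕ => ‖φ (k : ℝ)‖ ^ 2) (m + 1)
    simp only [Nat.cast_add, Nat.cast_one, Nat.cast_zero, hφ0] at this
    simpa using this
  simp only [htel] at hslope
  rw [← Finset.mul_sum] at hslope
  have hsum : 2 * ε * ∑ k ∈ Finset.range (m + 1), h1 e lam (φ ((k : ℝ) + s)) ≤ 1 := by
    have : 0 ≤ ‖φ ((m : ℝ) + 1)‖ ^ 2 := sq_nonneg _
    rw [sub_zero, div_one] at hslope
    linarith
  have hs1 : |0 - s| ≤ 1 := by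
    rw [zero_sub, abs_neg, abs_of_pos hs.1]; exact hs.2.le
  have hphi1 : ∀ k ≤ m, MemH1 e lam (φ ((k : ℝ) + s)) := fun k hk =>
    memH2_memH1 e hl (hφm _ (hks k hk s hs))
  have hmemIcc : ∀ k ≤ m, (k : ℝ) + s ∈ Set.Icc 0 T := fun k hk =>
    Set.Ioo_subset_Icc_self (hks k hk s hs)
  have hpull : ∀ x, MemH1 e lam x → MemH1 e lam (ContinuousLinearMap.adjoint (U s) x) ∧
      h1 e lam (ContinuousLinearMap.adjoint (U s) x) ≤ M ^ 2 * h1 e lam x := by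
    intro x hx
    have := hM s 0 hs1 x hx
    rw [hU0] at this
    exact this
  have hLk : ∀ (k : ℕ) (t : ℝ), L ((k : ℝ) + t) = L t := by
    intro k t
    have hp : Function.Periodic L 1 := hLper
    have := hp.nat_mul k t
    rw [mul_one] at this
    rw [add_comm]; exact this
  have herr : ∀ k < m, ‖ContinuousLinearMap.adjoint (U s) (φ (((k + 1 : ℕ) : ℝ) + s)) -
      U 1 (ContinuousLinearMap.adjoint (U s) (φ ((k : ℝ) + s)))‖ ^ 2 ≤
      ε / 2 * (M ^ 2 * h1 e lam (φ ((k : ℝ) + s))) := by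
    intro k hk
    set x := ContinuousLinearMap.adjoint (U s) (φ ((k : ℝ) + s)) with hx
    have hk1 : ((k : ℝ) + 1) ≤ m := by exact_mod_cast hk
    have hk0 : (0 : ℝ) ≤ k := Nat.cast_nonneg k
    have hxm := (hpull _ (hphi1 k hk.le)).1
    have hd : ∀ r ∈ Set.Icc (0 : ℝ) 1, ∃ c ≤ ε / 2 * (M ^ 2 * h1 e lam (φ ((k : ℝ) + s))),
        HasDerivAt (fun r => ‖φ ((k : ℝ) + (s + r)) - U (s + r) x‖ ^ 2) c r := by
      intro r hr
      have hin : (k : ℝ) + (s + r) ∈ Set.Ioo 0 T :=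
        ⟨by linarith [hs.1, hr.1], by linarith [hs.2, hr.2]⟩
      have d1 : HasDerivAt (fun r => φ ((k : ℝ) + (s + r))) _ r :=
        HasDerivAt.comp_const_add s r (HasDerivAt.comp_const_add (k : ℝ) (s + r) (hφd _ hin))
      have d2 : HasDerivAt (fun r => U (s + r) x) _ r :=
        HasDerivAt.comp_const_add s r (hUgen x hxm (s + r))
      refine ⟨_, ?_, hasDerivAt_normSq (d1.sub d2)⟩
      obtain ⟨hy, hyb⟩ := hM s (s + r) (by
        rw [add_sub_cancel_left, abs_of_nonneg hr.1]; exact hr.2) _ (hphi1 k hk.le)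
      rw [← hx] at hy hyb
      set y := U (s + r) x
      set p := φ ((k : ℝ) + (s + r)) with hp
      have hpm := hφm _ hin
      rw [← hp] at hpm
      have hsub := memH1_sub hl (memH2_memH1 e hl hpm) hy
      have e1 : Complex.I • L ((k : ℝ) + (s + r)) p - ε • Gam (⇑e) lam p - Complex.I • L (s + r) y
          = Complex.I • L (s + r) (p - y) - ε • Gam (⇑e) lam p := by
        rw [hLk, map_sub, smul_sub]; abel
      rw [e1, inner_sub_right, Complex.sub_re, antisym (hLsym _ _ _ hsub hsub), re_real_smul]
      have := mul_le_mul_of_nonneg_left (gam_sub e hl hpm hy) hε.le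
      have := mul_le_mul_of_nonneg_left hyb hε.le
      linarith
    have hmv := (convex_Icc (0 : ℝ) 1).image_sub_le_mul_sub_of_deriv_le
      (f := fun r => ‖φ ((k : ℝ) + (s + r)) - U (s + r) x‖ ^ 2)
      (fun r hr => by
        obtain ⟨c, _, hc⟩ := hd r hr
        exact hc.continuousAt.continuousWithinAt)
      (fun r hr => by
        obtain ⟨c, _, hc⟩ := hd r (interior_subset hr)
        exact hc.differentiableAt.differentiableWithinAt)
      (C := ε / 2 * (M ^ 2 * h1 e lam (φ ((k : ℝ) + s))))
      (fun r hr => by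
        obtain ⟨c, hcle, hc⟩ := hd r (interior_subset hr)
        rw [hc.deriv]; exact hcle)
      0 (by simp) 1 (by simp) zero_le_one
    have hz : φ ((k : ℝ) + (s + 0)) - U (s + 0) x = 0 := by
      rw [add_zero, hx, adj_right (hUiso s) (hUsurj s), sub_self]
    simp only [hz, norm_zero] at hmv
    have e2 : ContinuousLinearMap.adjoint (U s) (φ (((k + 1 : ℕ) : ℝ) + s)) - U 1 x =
        ContinuousLinearMap.adjoint (U s) (φ ((k : ℝ) + (s + 1)) - U (s + 1) x) := by
      rw [map_sub, hper, adj_left (hUiso s)]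
      push_cast
      rw [show (k : ℝ) + 1 + s = (k : ℝ) + (s + 1) by ring]
    rw [e2, adj_norm (hUiso s) (hUsurj s)]
    linarith
  refine ⟨fun k => ContinuousLinearMap.adjoint (U s) (φ ((k : ℝ) + s)), ?_, ?_, ?_, ?_, ?_⟩
  · intro k hk
    simp only [adj_norm (hUiso s) (hUsurj s)]
    exact hup _ (hmemIcc k hk)
  · intro k hk
    simp only [adj_norm (hUiso s) (hUsurj s)]
    exact hdown _ (hmemIcc k hk)
  · intro k hk
    exact (hpull _ (hphi1 k hk)).1
  · have h2 : ∑ k ∈ Finset.range (m + 1),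
        h1 e lam (ContinuousLinearMap.adjoint (U s) (φ ((k : ℝ) + s))) ≤
        ∑ k ∈ Finset.range (m + 1), M ^ 2 * h1 e lam (φ ((k : ℝ) + s)) :=
      Finset.sum_le_sum fun k hk => (hpull _ (hphi1 k (hkm k hk))).2
    rw [← Finset.mul_sum] at h2
    have h3 := mul_le_mul_of_nonneg_left h2 (by positivity : 0 ≤ 2 * ε)
    have h4 := mul_le_mul_of_nonneg_left hsum (sq_nonneg M)
    linarith
  · have h2 := Finset.sum_le_sum fun k hk => herr k (Finset.mem_range.1 hk)
    refine h2.trans ?_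
    rw [← Finset.mul_sum, ← Finset.mul_sum]
    have h5 := hsum
    rw [Finset.sum_range_succ] at h5
    have h6 := mul_nonneg hε.le (h1_nonneg (e := e) hl (φ ((m : ℝ) + s)))
    have h4 : 2 * ε * ∑ k ∈ Finset.range m, h1 e lam (φ ((k : ℝ) + s)) ≤ 1 := by linarith
    have h7 := mul_le_mul_of_nonneg_left h4 (sq_nonneg M)
    linarith

end Evolution

end Relax

/-- sufficiency direction of Theorem `main`: if the period operator `V = U(1)`
of the unitary evolution generated by the 1-periodic symmetric family `L(t)` has no
eigenvector in `H¹(Γ)`, then the family `L(t)` is relaxation-enhancing: solutions of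
`φ' = iL(t)φ − εΓφ` with unit initial data satisfy `‖φ^ε(τ/ε)‖ < δ` for all small `ε`. -/
theorem statement10 {H : Type*} [NormedAddCommGroup H] [InnerProductSpace ℂ H]
    [CompleteSpace H] [TopologicalSpace.SeparableSpace H]
    (e : HilbertBasis ℕ ℂ H) (lam : ℕ → ℝ)
    (hlam_pos : ∀ j, 0 < lam j) (hlam_mono : Monotone lam)
    (hlam_top : Filter.Tendsto lam Filter.atTop Filter.atTop)
    (L : ℝ → H →ₗ[ℂ] H)
    (hLsym : ∀ t : ℝ, ∀ x y : H, MemH1 (⇑e) lam x → MemH1 (⇑e) lam y →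
      ⟪L t x, y⟫_ℂ = ⟪x, L t y⟫_ℂ)
    (hLper : ∀ t : ℝ, L (t + 1) = L t)
    (C₀ : ℝ)
    (hcond1 : ∀ t : ℝ, ∀ ψ : H, MemH1 (⇑e) lam ψ →
      ENNReal.ofReal (‖L t ψ‖ ^ 2) ≤ ENNReal.ofReal (C₀ ^ 2) * H1normSq (⇑e) lam ψ)
    (U : ℝ → H →L[ℂ] H)
    (hUiso : ∀ t : ℝ, ∀ x y : H, ⟪U t x, U t y⟫_ℂ = ⟪x, y⟫_ℂ)
    (hUsurj : ∀ t : ℝ, Function.Surjective (U t))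
    (hUcont : ∀ ψ : H, Continuous fun t => U t ψ)
    (hU0 : U 0 = ContinuousLinearMap.id ℂ H)
    (hUgen : ∀ ψ : H, MemH1 (⇑e) lam ψ → ∀ t : ℝ,
      HasDerivAt (fun s => U s ψ) (Complex.I • L t (U t ψ)) t)
    (B : ℝ → ℝ) (hBnonneg : ∀ s, 0 ≤ B s)
    (hBloc : ∀ R : ℝ, ∃ M : ℝ, ∀ s ∈ Set.Icc (-R) R, B s ≤ M)
    (hcond2 : ∀ s t : ℝ, ∀ ψ : H, MemH1 (⇑e) lam ψ →
      H1normSq (⇑e) lam (U t (ContinuousLinearMap.adjoint (U s) ψ)) ≤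
        ENNReal.ofReal (B (t - s) ^ 2) * H1normSq (⇑e) lam ψ)
    (hnoeig : ∀ ψ : H, ψ ≠ 0 → (∃ μ : ℂ, U 1 ψ = μ • ψ) → ¬ MemH1 (⇑e) lam ψ) :
    ∀ τ δ : ℝ, 0 < τ → 0 < δ → ∃ ε₀ : ℝ, 0 < ε₀ ∧
      ∀ ε : ℝ, 0 < ε → ε < ε₀ → ∀ φ₀ : H, ‖φ₀‖ = 1 → ∀ φε : ℝ → H,
        ContinuousOn φε (Set.Icc 0 (τ / ε)) → φε 0 = φ₀ →
        (∀ t ∈ Set.Ioo (0 : ℝ) (τ / ε), MemH2 (⇑e) lam (φε t)) →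
        (∀ t ∈ Set.Ioo (0 : ℝ) (τ / ε),
          HasDerivAt φε (Complex.I • L t (φε t) - ε • Gam (⇑e) lam (φε t)) t) →
        ‖φε (τ / ε)‖ < δ := by
  intro τ δ hτ hδ
  by_contra hcon
  push Not at hcon
  obtain ⟨M, hMB⟩ := hBloc 1
  have hadj0 : ∀ x, ContinuousLinearMap.adjoint (U 0) x = x := fun x => by
    have := Relax.adj_left (hUiso 0) x
    rwa [show U 0 x = x by rw [hU0]; rfl] at this
  have hUm : ∀ t ψ, MemH1 (⇑e) lam ψ → MemH1 (⇑e) lam (U t ψ) := fun t ψ hψ => by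
    have := (Relax.transfer hlam_pos hψ (hcond2 0 t ψ hψ)).1
    rwa [hadj0] at this
  have hM : ∀ s t : ℝ, |t - s| ≤ 1 → ∀ ψ : H, MemH1 (⇑e) lam ψ →
      MemH1 (⇑e) lam (U t (ContinuousLinearMap.adjoint (U s) ψ)) ∧
      Relax.h1 e lam (U t (ContinuousLinearMap.adjoint (U s) ψ)) ≤
        M ^ 2 * Relax.h1 e lam ψ := by
    intro s t hst ψ hψ
    obtain ⟨h1, h2⟩ := Relax.transfer hlam_pos hψ (hcond2 s t ψ hψ)
    refine ⟨h1, h2.trans (mul_le_mul_of_nonneg_right ?_ (Relax.h1_nonneg hlam_pos ψ))⟩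
    exact pow_le_pow_left₀ (hBnonneg _) (hMB _ (abs_le.1 hst)) 2
  have hper := Relax.U_period e hlam_pos L hLsym hLper U hU0 hUgen hUm
  have hstep : ∀ n : ℕ, ∃ m : ℕ, n ≤ m ∧ ∃ a : ℕ → H, (∀ k ≤ m, ‖a k‖ ≤ 1) ∧
      (∀ k ≤ m, δ ≤ ‖a k‖) ∧ (∀ k ≤ m, MemH1 e lam (a k)) ∧
      (∑ k ∈ Finset.range (m + 1), Relax.h1 e lam (a k) ≤ M ^ 2 / τ * ((m : ℝ) + 1)) ∧
      (∑ k ∈ Finset.range m, ‖a (k + 1) - U 1 (a k)‖ ^ 2 ≤ M ^ 2 / 4) := by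
    intro n
    obtain ⟨ε, hε, hεn, φ₀, hφ₀, φ, hφc, hφ0, hφm, hφd, hφT⟩ :=
      hcon (τ / ((n : ℝ) + 2)) (by positivity)
    have hn : (n : ℝ) + 2 < τ / ε := by
      rw [lt_div_iff₀ hε]
      rw [lt_div_iff₀ (by positivity)] at hεn
      linarith
    have hfl : n + 2 ≤ ⌊τ / ε⌋₊ := Nat.le_floor (by push_cast; exact hn.le)
    obtain ⟨m, hm⟩ : ∃ m, ⌊τ / ε⌋₊ = m + 1 := ⟨⌊τ / ε⌋₊ - 1, by omega⟩
    have hm1 : (m : ℝ) + 1 ≤ τ / ε := by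
      have := Nat.floor_le (show 0 ≤ τ / ε by positivity)
      rw [hm] at this
      exact_mod_cast this
    have hm2 : τ / ε < (m : ℝ) + 1 + 1 := by
      have := Nat.lt_floor_add_one (τ / ε)
      rw [hm] at this
      exact_mod_cast this
    refine ⟨m, by omega, ?_⟩
    obtain ⟨a, h1, h2, h3, h4, h5⟩ := Relax.solution_lemma e hlam_pos L hLsym hLper U hUiso hUsurj
      hUgen hper hU0 hM hε (φ := φ) (by rw [hφ0, hφ₀]) hφc hφm hφd hφT hm1
    refine ⟨a, h1, h2, h3, ?_, h5⟩
    rw [div_mul_eq_mul_div, le_div_iff₀ hτ]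
    have hS : 0 ≤ ∑ k ∈ Finset.range (m + 1), Relax.h1 e lam (a k) :=
      Finset.sum_nonneg fun k _ => Relax.h1_nonneg hlam_pos _
    have hτm : τ ≤ 2 * ε * ((m : ℝ) + 1) := by
      rw [div_lt_iff₀ hε] at hm2
      have hmm : (1 : ℝ) ≤ (m : ℝ) + 1 := by linarith [(Nat.cast_nonneg m : (0 : ℝ) ≤ m)]
      nlinarith
    have h6 := mul_le_mul_of_nonneg_right hτm hS
    have h7 := mul_le_mul_of_nonneg_right h4 (show (0 : ℝ) ≤ (m : ℝ) + 1 by positivity)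
    linarith
  choose m hmn a h1 h2 h3 h4 h5 using hstep
  obtain ⟨x, hx0, hμ, hx1⟩ := Relax.exists_eigenvector e hlam_pos hlam_mono hlam_top (U 1) (hUiso 1)
    (hUsurj 1) hδ m (Filter.tendsto_atTop_mono hmn Filter.tendsto_id) a h1 h2 h3 h4 h5
  exact hnoeig x hx0 hμ hx1
end
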